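/- arXiv:2505.14132 — 7 statements merged into one kernel-verified Lean document; each statement's English description precedes it below -/
import Mathlib

section
/- Let H be an infinite-dimensional complex Hilbert space containing an orthonormal system (e_n)_{n∈ℕ}. Let E = ℓ∞(ℕ;H), the space of bounded H-valued sequences, regarded as a lattice-normed space over A = ℓ∞(ℕ;ℂ) with lattice norm |f| = (n ↦ ‖f(n)‖_H). For f ∈ ℓ∞(ℕ;ℂ) and e ∈ H write f ⊗ e for the sequence (n ↦ f(n)·e). Then the set M = { 1_{{k}} ⊗ e_j : k, j ∈ ℕ, 1 ≤ j ≤ k } (where 1_{{k}} is the indicator sequence of {k}) is totally order-bounded in E, but it is not uniformly totally order-bounded in E. -/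
/-!
Total order-boundedness is witnessed by the sequence `u m = 1_{n > m}`, which decreases pointwise
to `0`. Given `m`, the finite set `F` consists of `0` and the elements `1_{k} ⊗ e_j` with
`j ≤ k ≤ m`: at the coordinates `n ≤ m` every element of `M` agrees with a member of `F` (itself if
`k ≤ m`, and `0` otherwise), while at the coordinates `n > m` its distance to `0` is at most `1`.

Uniform total order-boundedness fails for `ε = 1/2`. At coordinate `k` the set `M` contains the `k`
vectors `e_1, …, e_k`, whose mutual distances are `√2 > 1`, so distinct `e_j` need distinct members
of `F`; this is impossible as soon as `k` exceeds the cardinality of `F`.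
-/

noncomputable section

open scoped ENNReal

/-- Distinct members of an orthonormal family are at distance `√2`; only `> 1` is needed. -/
lemma one_lt_norm_sub_of_orthonormal {H : Type} [NormedAddCommGroup H] [InnerProductSpace ℂ H]
    {e : ℕ → H} (he : Orthonormal ℂ e) {i j : ℕ} (hij : i ≠ j) : 1 < ‖e i - e j‖ := by
  have h := norm_sub_sq (𝕜 := ℂ) (e i) (e j)
  rw [he.2 hij, he.1 i, he.1 j] at h
  norm_num at h
  nlinarith [norm_nonneg (e i - e j)]

/-- In `E = ℓ∞(ℕ; H)`, a lattice-normed space over `A = ℓ∞(ℕ; ℂ)`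
with lattice norm `|f| = (n ↦ ‖f n‖)` (order and infima in `ℓ∞(ℕ; ℝ)` taken
pointwise), the set `M = {1_{k} ⊗ e_j : 1 ≤ j ≤ k}` is totally order-bounded but not
uniformly totally order-bounded. -/
theorem single_orthonormal_totallyOrderBounded_not_unif
    {H : Type} [NormedAddCommGroup H] [InnerProductSpace ℂ H] [CompleteSpace H]
    (hH : ¬ FiniteDimensional ℂ H)
    (e : ℕ → H) (he : Orthonormal ℂ e)
    (M : Set (lp (fun _ : ℕ => H) ∞))
    (hM : M = { f | ∃ k j : ℕ, 1 ≤ j ∧ j ≤ k ∧ f = lp.single ∞ k (e j) }) :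
    -- `M` is totally order-bounded:
    (∃ (ι : Type) (_ : Preorder ι) (_ : IsDirected ι (· ≤ ·)) (_ : Nonempty ι)
        (u : ι → ℕ → ℝ),
      (∀ i, Memℓp (u i) ∞) ∧ (∀ i n, 0 ≤ u i n) ∧
      (∀ ⦃i j⦄, i ≤ j → ∀ n, u j n ≤ u i n) ∧ IsGLB (Set.range u) 0 ∧
      ∀ i, ∃ F : Finset (lp (fun _ : ℕ => H) ∞), ∃ hF : F.Nonempty,
        ∀ f ∈ M, ∀ n : ℕ, F.inf' hF (fun g => ‖f n - g n‖) ≤ u i n) ∧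
    -- but `M` is not uniformly totally order-bounded:
    ¬ (∀ ε : ℝ, 0 < ε → ∃ F : Finset (lp (fun _ : ℕ => H) ∞), ∃ hF : F.Nonempty,
        ∀ f ∈ M, ∀ n : ℕ, F.inf' hF (fun g => ‖f n - g n‖) ≤ ε) := by
  classical
  subst hM
  constructor
  · refine ⟨ℕ, inferInstance, inferInstance, inferInstance,
      fun m n => if n ≤ m then 0 else 1, ?_, ?_, ?_, ?_, ?_⟩
    · intro m
      refine memℓp_infty ⟨1, ?_⟩
      rintro _ ⟨n, rfl⟩
      dsimp only
      split_ifs <;> simp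
    · intro m n
      dsimp only
      split_ifs <;> norm_num
    · intro i j hij n
      dsimp only
      split_ifs <;> first | omega | norm_num
    · constructor
      · rintro _ ⟨m, rfl⟩ n
        dsimp only [Pi.zero_apply]
        split_ifs <;> norm_num
      · intro v hv n
        -- The `n`-th term of the sequence already vanishes at coordinate `n`.
        simpa using hv (Set.mem_range_self n) n
    · intro m
      refine ⟨insert 0 ((Finset.range (m + 1) ×ˢ Finset.range (m + 1)).image
        fun p => lp.single ∞ p.1 (e p.2)), Finset.insert_nonempty _ _, ?_⟩
      rintro _ ⟨k, j, -, hjk, rfl⟩ n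
      rw [Finset.inf'_le_iff]
      by_cases hk : k ≤ m
      · refine ⟨lp.single ∞ k (e j), Finset.mem_insert_of_mem (Finset.mem_image.2
          ⟨(k, j), by simp only [Finset.mem_product, Finset.mem_range]; omega, rfl⟩), ?_⟩
        rw [sub_self, norm_zero]
        dsimp only
        split_ifs <;> norm_num
      · refine ⟨0, Finset.mem_insert_self _ _, ?_⟩
        by_cases hn : n = k
        · subst hn
          simp [hk, he.1 j]
        · simp only [lp.single_apply_ne (E := fun _ : ℕ => H) ∞ k (e j) hn]
          split_ifs <;> simp
  · intro h
    obtain ⟨F, hF, hFM⟩ := h (1 / 2) (by norm_num)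
    have key : ∀ j ∈ Finset.Icc 1 (F.card + 1), ∃ g ∈ F, ‖e j - g (F.card + 1)‖ ≤ 1 / 2 := by
      intro j hj
      rw [Finset.mem_Icc] at hj
      simpa [Finset.inf'_le_iff] using
        hFM _ ⟨F.card + 1, j, hj.1, hj.2, rfl⟩ (F.card + 1)
    choose! g hgF hg using key
    obtain ⟨i, hi, j, hj, hij, hgij⟩ :=
      Finset.exists_ne_map_eq_of_card_lt_of_maps_to (by simp) hgF
    have h1 := hg i hi
    have h2 := hg j hj
    rw [hgij] at h1
    rw [norm_sub_rev] at h2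
    have h3 := norm_sub_le_norm_sub_add_norm_sub (e i) (g j (F.card + 1)) (e j)
    linarith [one_lt_norm_sub_of_orthonormal he hij]
end
end

section
/- Let E, E₁, E₂ be lattice-normed spaces over a Stone algebra A, and let m : E × E₁ → E₂ be a bilinear map with |m(x,y)| ≤ |x|·|y| for all x ∈ E, y ∈ E₁. If M ⊆ E and N ⊆ E₁ are totally order-bounded, then m(M,N) = {m(a,b) : a ∈ M, b ∈ N} is totally order-bounded in E₂; if M and N are uniformly totally order-bounded, then m(M,N) is uniformly totally order-bounded. -/
/-!
For `a ∈ M`, `b ∈ N` and approximants `y`, `z`, bilinearity gives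
`m a b - m y z = m (a - y) b + m a (b - z) - m (a - y) (b - z)`, hence
`|m a b - m y z| ≤ |a - y| |b| + |a| |b - z| + |a - y| |b - z|`.
This bound does not involve `|y|` and `|z|`, which matters because the finite sets of approximants
are not bounded uniformly in the index of the net. A totally order-bounded set is order-bounded,
so `|a| ≤ U` and `|b| ≤ V` for fixed `U`, `V`. Taking the infimum first over `y` and then over `z`
gives the distance bound `u V + U v + u v` (`LatticeNorm.infDistLE_image2`).

Infima are moved through products by `le_glb_mul_add`: multiplication by a positive `p` is order
continuous, since `p ≤ K • 1` for a real `K`, so that `(s - f) p ≤ K (s - f)`, whose infimum over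
`s` vanishes as soon as `f = inf s`. The same lemma shows that the net
`(α, β) ↦ u_α V + U v_β + u_α v_β` decreases to `0`. In the uniform case `u = v = δ`,
and `δ` is taken small with respect to `U`, `V` and `ε`.

The hypotheses on `A` do not include compatibility of the involution with complex scalars; it
follows from the order (`starModule_complex`), which makes the C*-algebra library available.
-/

noncomputable section

open scoped Pointwise

section LNS

variable (A : Type*) [NormedCommRing A] [StarRing A] [CStarRing A]
  [NormedAlgebra ℂ A] [CompleteSpace A] [PartialOrder A] [StarOrderedRing A]

/-- A *Stone algebra*: a commutative unital C*-algebra which is order-complete. -/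
class StoneAlgebra : Prop where
  exists_isGLB : ∀ S : Set A, S.Nonempty → BddBelow S → ∃ v, IsGLB S v

variable (E : Type*) [AddCommGroup E] [Module ℂ E]

/-- A lattice norm on `E` with values in the positive cone of `A`. -/
structure LatticeNorm where
  val : E → A
  nonneg : ∀ x, 0 ≤ val x
  eq_zero_iff : ∀ x, val x = 0 ↔ x = 0
  val_smul : ∀ (c : ℂ) (x : E), val (c • x) = algebraMap ℂ A (‖c‖ : ℂ) * val x
  val_add_le : ∀ x y, val (x + y) ≤ val x + val y

variable {A E}

namespace LatticeNorm

variable (L : LatticeNorm A E)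

/-- `inf_{y ∈ F} |x - y| ≤ u`: the infimum exists and is dominated by `u`. -/
def infDistLE (x : E) (F : Finset E) (u : A) : Prop :=
  ∃ v, IsGLB ((fun y => L.val (x - y)) '' (F : Set E)) v ∧ v ≤ u

/-- A net in `A₊` decreasing to zero. -/
def DecrToZero {ι : Type} [Preorder ι] (u : ι → A) : Prop :=
  (∀ i, 0 ≤ u i) ∧ Antitone u ∧ IsGLB (Set.range u) 0

/-- `M` is totally order-bounded. -/
def TotallyOrderBounded (M : Set E) : Prop :=
  ∃ (ι : Type) (_ : Preorder ι) (_ : IsDirected ι (· ≤ ·)) (_ : Nonempty ι) (u : ι → A),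
    DecrToZero (A := A) u ∧
    ∀ i, ∃ F : Finset E, F.Nonempty ∧ ∀ x ∈ M, L.infDistLE x F (u i)

/-- `M` is uniformly totally order-bounded. -/
def UnifTotallyOrderBounded (M : Set E) : Prop :=
  ∀ ε : ℝ, 0 < ε → ∃ F : Finset E, F.Nonempty ∧ ∀ x ∈ M,
    L.infDistLE x F (algebraMap ℂ A (ε : ℂ))

/-- `M` is order-bounded. -/
def OrderBounded (M : Set E) : Prop :=
  ∃ f : A, 0 ≤ f ∧ ∀ x ∈ M, L.val x ≤ f

/-- Order convergence of a net in `E`. -/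
def OrderConv {ι : Type} [Preorder ι] (x : ι → E) (x₀ : E) : Prop :=
  ∃ (κ : Type) (_ : Preorder κ) (_ : IsDirected κ (· ≤ ·)) (_ : Nonempty κ) (u : κ → A),
    DecrToZero (A := A) u ∧ ∀ k, ∃ i₀, ∀ i ≥ i₀, L.val (x i - x₀) ≤ u k

/-- A set is order-closed if it contains all order-limits of nets with terms in it. -/
def OrderClosed (S : Set E) : Prop :=
  ∀ (ι : Type) (_ : Preorder ι) (_ : IsDirected ι (· ≤ ·)) (_ : Nonempty ι)
    (x : ι → E) (x₀ : E), (∀ i, x i ∈ S) → L.OrderConv x x₀ → x₀ ∈ S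

/-- The order-closure: the smallest order-closed set containing `M`. -/
def ocl (M : Set E) : Set E :=
  ⋂₀ { S : Set E | M ⊆ S ∧ L.OrderClosed S }

end LatticeNorm

end LNS

/-! ### Order and involution in the algebra -/

section OrderFacts

/-- The scalar `i` satisfies `star i = -i`. With `I` the image of the complex unit in `A`,
the element `e = (1 - I * star I) / 2` is a self-adjoint idempotent on which `star I` agrees with
`I`; so both `star e * e = e` and `star (I * e) * (I * e) = -e` are nonnegative and `e = 0`. -/
theorem star_algebraMap_I {A : Type*} [NormedCommRing A] [StarRing A] [NormedAlgebra ℂ A]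
    [PartialOrder A] [StarOrderedRing A] :
    star (algebraMap ℂ A Complex.I) = -algebraMap ℂ A Complex.I := by
  set I := algebraMap ℂ A Complex.I with hI
  have hII : I * I = -1 := by rw [hI, ← map_mul, Complex.I_mul_I]; simp
  have hJJ : star I * star I = -1 := by rw [← star_mul, hII]; simp
  -- To avoid denominators, `t = 2 e` is used: `t * t = 2 t`.
  set t := 1 - I * star I with ht
  have hst : star t = t := by simp [ht, mul_comm]
  have htt : t * t = 2 * t := by
    rw [ht]; linear_combination (star I * star I) * hII - hJJ
  have hJt : star I * t = I * t := by
    rw [ht]; linear_combination (-I) * hJJ + (star I) * hII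
  have h1 : 0 ≤ 2 * t := by
    have := star_mul_self_nonneg t
    rwa [hst, htt] at this
  have h2 : 0 ≤ -(2 * t) := by
    have := star_mul_self_nonneg (I * t)
    have e : star (I * t) * (I * t) = -(2 * t) := by
      rw [star_mul, hst]
      linear_combination (I * t) * hJt + (t * t) * hII - htt
    rwa [e] at this
  have h3 : 2 * t = 0 := le_antisymm (by simpa using add_le_add_left h2 (2 * t)) h1
  have h4 : t = 0 := by
    have h5 : (algebraMap ℂ A 2⁻¹) * 2 = 1 := by
      rw [← map_ofNat (algebraMap ℂ A) 2, ← map_mul]; simp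
    linear_combination (algebraMap ℂ A 2⁻¹) * h3 - t * h5
  rw [ht] at h4
  linear_combination (I) * h4 + (star I) * hII

/-- The involution is conjugate-linear. Real scalars are handled by continuity of `star`, and the
imaginary unit by `star_algebraMap_I`. -/
theorem starModule_complex {A : Type*} [NormedCommRing A] [StarRing A] [CStarRing A]
    [NormedAlgebra ℂ A] [PartialOrder A] [StarOrderedRing A] : StarModule ℂ A := by
  have hreal : ∀ r : ℝ, star (algebraMap ℂ A (r : ℂ)) = algebraMap ℂ A (r : ℂ) := by
    intro r
    have h := map_real_smul (starAddEquiv : A ≃+ A) (continuous_star (R := A)) r 1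
    have e : algebraMap ℂ A (r : ℂ) = r • (1 : A) := by
      rw [Algebra.algebraMap_eq_smul_one]; rfl
    rw [e]
    simpa using h
  refine ⟨fun c a => ?_⟩
  have hc : star (algebraMap ℂ A c) = algebraMap ℂ A (star c) := by
    conv_lhs => rw [← Complex.re_add_im c]
    rw [map_add, map_mul, star_add, star_mul, hreal, hreal, star_algebraMap_I]
    have : star c = (c.re : ℂ) - (c.im : ℂ) * Complex.I := by
      apply Complex.ext <;> simp
    rw [this, map_sub, map_mul]
    ring
  rw [Algebra.smul_def, Algebra.smul_def, star_mul, hc, mul_comm]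

variable {A : Type*} [NormedCommRing A] [StarRing A] [CStarRing A] [NormedAlgebra ℂ A]
  [CompleteSpace A] [PartialOrder A] [StarOrderedRing A]

theorem isOrderedRing_of_starOrdered : IsOrderedRing A := by
  have : StarModule ℂ A := starModule_complex
  let _ : CommCStarAlgebra A := {}
  have : IsOrderedAddMonoid A := inferInstance
  exact IsOrderedRing.of_mul_nonneg fun a b ha hb => Commute.mul_nonneg ha hb (.all _ _)

theorem algebraMap_ofReal_nonneg {c : ℝ} (hc : 0 ≤ c) : 0 ≤ algebraMap ℂ A (c : ℂ) := by
  have : StarModule ℂ A := starModule_complex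
  let _ : CommCStarAlgebra A := {}
  have h : 0 ≤ algebraMap ℝ A c := by
    rw [Algebra.algebraMap_eq_smul_one]
    exact smul_nonneg hc zero_le_one
  exact h

theorem exists_le_algebraMap_ofReal {a : A} (ha : 0 ≤ a) :
    ∃ c : ℝ, 0 < c ∧ a ≤ algebraMap ℂ A (c : ℂ) := by
  have hO : IsOrderedRing A := isOrderedRing_of_starOrdered
  have : StarModule ℂ A := starModule_complex
  let _ : CommCStarAlgebra A := {}
  have h : a ≤ algebraMap ℝ A ‖a‖ := IsSelfAdjoint.le_algebraMap_norm_self ha.isSelfAdjoint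
  refine ⟨‖a‖ + 1, by positivity, h.trans ?_⟩
  have h1 : (0 : A) ≤ algebraMap ℂ A ((1 : ℝ) : ℂ) := algebraMap_ofReal_nonneg zero_le_one
  have e : algebraMap ℂ A ((‖a‖ + 1 : ℝ) : ℂ)
      = algebraMap ℝ A ‖a‖ + algebraMap ℂ A ((1 : ℝ) : ℂ) := by
    rw [Complex.ofReal_add, map_add]; rfl
  rw [e]
  exact le_add_of_nonneg_right h1

/-- Order continuity of multiplication by a positive element `p`, in the form needed to take an
infimum inside an affine expression `s * p + q`. -/
theorem le_glb_mul_add {S : Set A} {f p h q : A} (hf : IsGLB S f) (hp : 0 ≤ p)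
    (H : ∀ s ∈ S, h ≤ s * p + q) : h ≤ f * p + q := by
  have hO : IsOrderedRing A := isOrderedRing_of_starOrdered
  obtain ⟨c, hc, hpc⟩ := exists_le_algebraMap_ofReal hp
  set K := algebraMap ℂ A (c : ℂ)
  set K' := algebraMap ℂ A ((c⁻¹ : ℝ) : ℂ) with hK'
  have hK : 0 ≤ K := algebraMap_ofReal_nonneg hc.le
  have hK'0 : 0 ≤ K' := algebraMap_ofReal_nonneg (inv_nonneg.mpr hc.le)
  have hKK : K' * K = 1 := by
    rw [hK', ← map_mul, ← Complex.ofReal_mul, inv_mul_cancel₀ hc.ne']; simp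
  have h1 : K' * (h - q - f * p) + f ≤ f := by
    refine (le_isGLB_iff hf).2 fun s hs => ?_
    have h2 : h - q - f * p ≤ K * (s - f) := by
      have h3 : 0 ≤ (s - f) * (K - p) :=
        mul_nonneg (sub_nonneg.2 (hf.1 hs)) (sub_nonneg.2 hpc)
      rw [← sub_nonneg]
      have h4 := add_nonneg h3 (sub_nonneg.2 (H s hs))
      convert h4 using 1
      ring
    have h5 := mul_le_mul_of_nonneg_left h2 hK'0
    rw [← mul_assoc, hKK, one_mul] at h5
    exact le_sub_iff_add_le.1 h5
  have h6 : K' * (h - q - f * p) ≤ 0 := by simpa using h1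
  have h7 := mul_le_mul_of_nonneg_left h6 hK
  rw [← mul_assoc, mul_comm K, hKK, one_mul, mul_zero] at h7
  rwa [sub_sub, sub_nonpos, add_comm] at h7

end OrderFacts

/-! ### Distance bounds in lattice-normed spaces -/

namespace LatticeNorm

theorem val_neg {A : Type*} [NormedCommRing A] [StarRing A] [CStarRing A] [NormedAlgebra ℂ A]
    [CompleteSpace A] [PartialOrder A] [StarOrderedRing A] {E : Type*} [AddCommGroup E] [Module ℂ E]
    (L : LatticeNorm A E) (x : E) : L.val (-x) = L.val x := by
  have h := L.val_smul (-1) x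
  simpa using h

variable {A : Type*} [NormedCommRing A] [StarRing A] [CStarRing A] [NormedAlgebra ℂ A]
  [CompleteSpace A] [PartialOrder A] [StarOrderedRing A]
  {E E₁ E₂ : Type*} [AddCommGroup E] [Module ℂ E] [AddCommGroup E₁] [Module ℂ E₁]
  [AddCommGroup E₂] [Module ℂ E₂]

/-- A set within distance `u` of a finite set is order-bounded. -/
theorem orderBounded_of_infDistLE (L : LatticeNorm A E) {M : Set E} {F : Finset E} {u : A}
    (hu : 0 ≤ u) (h : ∀ x ∈ M, L.infDistLE x F u) : L.OrderBounded M := by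
  have hO : IsOrderedRing A := isOrderedRing_of_starOrdered
  refine ⟨u + ∑ y ∈ F, L.val y, add_nonneg hu (Finset.sum_nonneg fun y _ => L.nonneg y), ?_⟩
  intro x hx
  obtain ⟨v, hv, hvu⟩ := h x hx
  rw [← sub_le_iff_le_add]
  refine le_trans ((le_isGLB_iff hv).2 ?_) hvu
  rintro _ ⟨y, hy, rfl⟩
  rw [sub_le_iff_le_add]
  have h1 := L.val_add_le (x - y) y
  rw [sub_add_cancel] at h1
  exact h1.trans (add_le_add le_rfl
    (Finset.single_le_sum (f := L.val) (fun y _ => L.nonneg y) hy))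

open Classical in
/-- If `a` is within `u` of `F` and `b` within `v` of `G`, then `m a b` is within
`u V + U v + u v` of `m(F, G)`, where `U`, `V` dominate `|a|`, `|b|`. -/
theorem infDistLE_image2 [StoneAlgebra A] (L : LatticeNorm A E) (L₁ : LatticeNorm A E₁)
    (L₂ : LatticeNorm A E₂) (m : E →ₗ[ℂ] E₁ →ₗ[ℂ] E₂)
    (hm : ∀ (x : E) (y : E₁), L₂.val (m x y) ≤ L.val x * L₁.val y)
    {a : E} {b : E₁} {F : Finset E} {G : Finset E₁} {u v U V : A}
    (hF : F.Nonempty) (hG : G.Nonempty) (hU : L.val a ≤ U) (hV : L₁.val b ≤ V)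
    (ha : L.infDistLE a F u) (hb : L₁.infDistLE b G v) :
    L₂.infDistLE (m a b) (Finset.image₂ (fun y z => m y z) F G) (u * V + U * v + u * v) := by
  have hO : IsOrderedRing A := isOrderedRing_of_starOrdered
  obtain ⟨f, hf, hfu⟩ := ha
  obtain ⟨g, hg, hgv⟩ := hb
  have hU0 : 0 ≤ U := (L.nonneg a).trans hU
  have hV0 : 0 ≤ V := (L₁.nonneg b).trans hV
  have hf0 : 0 ≤ f := (le_isGLB_iff hf).2 (by rintro _ ⟨y, -, rfl⟩; exact L.nonneg _)
  obtain ⟨w, hw⟩ := StoneAlgebra.exists_isGLB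
    ((fun y => L₂.val (m a b - y)) ''
      (Finset.image₂ (fun y z => m y z) F G : Finset E₂))
    ((Finset.coe_nonempty.2 (Finset.image₂_nonempty_iff.2 ⟨hF, hG⟩)).image _)
    ⟨0, by rintro _ ⟨y, -, rfl⟩; exact L₂.nonneg _⟩
  refine ⟨w, hw, ?_⟩
  have key : ∀ y ∈ F, ∀ z ∈ G,
      w ≤ L.val (a - y) * (V + L₁.val (b - z)) + L₁.val (b - z) * U := by
    intro y hy z hz
    have h0 : w ≤ L₂.val (m a b - m y z) :=
      hw.1 ⟨m y z, Finset.mem_coe.2 (Finset.mem_image₂_of_mem hy hz), rfl⟩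
    have e : m a b - m y z = m (a - y) b + m a (b - z) + -(m (a - y) (b - z)) := by
      simp only [map_sub, LinearMap.sub_apply]; abel
    have h1 : L₂.val (m a b - m y z) ≤
        L₂.val (m (a - y) b) + L₂.val (m a (b - z)) + L₂.val (m (a - y) (b - z)) := by
      rw [e, ← L₂.val_neg (m (a - y) (b - z))]
      exact (L₂.val_add_le _ _).trans (add_le_add (L₂.val_add_le _ _) le_rfl)
    have h2 : L₂.val (m (a - y) b) ≤ L.val (a - y) * V :=
      (hm _ _).trans (mul_le_mul_of_nonneg_left hV (L.nonneg _))
    have h3 : L₂.val (m a (b - z)) ≤ U * L₁.val (b - z) :=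
      (hm _ _).trans (mul_le_mul_of_nonneg_right hU (L₁.nonneg _))
    refine (h0.trans (h1.trans (add_le_add (add_le_add h2 h3) (hm _ _)))).trans (le_of_eq ?_)
    ring
  have key2 : ∀ s ∈ (fun z => L₁.val (b - z)) '' (G : Set E₁), w ≤ s * (f + U) + f * V := by
    rintro _ ⟨z, hz, rfl⟩
    have h := le_glb_mul_add (h := w) (q := L₁.val (b - z) * U) hf
      (add_nonneg hV0 (L₁.nonneg (b - z))) (by rintro _ ⟨y, hy, rfl⟩; exact key y hy z hz)
    refine h.trans (le_of_eq ?_)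
    simp only
    ring
  have h := le_glb_mul_add hg (add_nonneg hf0 hU0) key2
  have hv0 : 0 ≤ v := le_trans ((le_isGLB_iff hg).2
    (by rintro _ ⟨y, -, rfl⟩; exact L₁.nonneg _)) hgv
  calc w ≤ g * (f + U) + f * V := h
    _ ≤ v * (u + U) + u * V := by
      refine add_le_add ?_ (mul_le_mul_of_nonneg_right hfu hV0)
      exact mul_le_mul hgv (add_le_add hfu le_rfl) (add_nonneg hf0 hU0) hv0
    _ = u * V + U * v + u * v := by ring

/-- The product net built from two nets decreasing to `0`. -/
theorem decrToZero_prod {ι κ : Type} [Preorder ι] [Preorder κ] [Nonempty ι] {u : ι → A} {v : κ → A}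
    (hu : DecrToZero u) (hv : DecrToZero v) {U V : A} (hU : 0 ≤ U) (hV : 0 ≤ V) :
    DecrToZero (fun i : ι × κ => u i.1 * V + U * v i.2 + u i.1 * v i.2) := by
  have hO : IsOrderedRing A := isOrderedRing_of_starOrdered
  obtain ⟨hu0, hua, hui⟩ := hu
  obtain ⟨hv0, hva, hvi⟩ := hv
  have hpos : ∀ i : ι × κ, 0 ≤ u i.1 * V + U * v i.2 + u i.1 * v i.2 := fun i =>
    add_nonneg (add_nonneg (mul_nonneg (hu0 _) hV) (mul_nonneg hU (hv0 _)))
      (mul_nonneg (hu0 _) (hv0 _))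
  refine ⟨hpos, ?_, ?_, ?_⟩
  · rintro i j ⟨h1, h2⟩
    exact add_le_add (add_le_add (mul_le_mul_of_nonneg_right (hua h1) hV)
      (mul_le_mul_of_nonneg_left (hva h2) hU))
      (mul_le_mul (hua h1) (hva h2) (hv0 _) (hu0 _))
  · rintro _ ⟨i, rfl⟩
    exact hpos i
  · intro h hh
    -- The infimum over the second index, with the first one fixed.
    have h1 : ∀ i, h ≤ u i * V + 0 := by
      intro i
      have := le_glb_mul_add (h := h) (q := u i * V) hvi (add_nonneg hU (hu0 i)) (by
        rintro _ ⟨k, rfl⟩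
        refine (hh ⟨(i, k), rfl⟩).trans (le_of_eq ?_)
        simp only
        ring)
      simpa using this
    have := le_glb_mul_add (h := h) (q := 0) hui hV (by rintro _ ⟨i, rfl⟩; exact h1 i)
    simpa using this

end LatticeNorm

/-! ### Images under bilinear maps -/

/-- Images of (uniformly) totally order-bounded sets under a bounded
bilinear map are (uniformly) totally order-bounded. -/
theorem bilinear_totallyOrderBounded
    {A : Type*} [NormedCommRing A] [StarRing A] [CStarRing A] [NormedAlgebra ℂ A]
    [CompleteSpace A] [PartialOrder A] [StarOrderedRing A] [StoneAlgebra A]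
    {E E₁ E₂ : Type*} [AddCommGroup E] [Module ℂ E] [AddCommGroup E₁] [Module ℂ E₁]
    [AddCommGroup E₂] [Module ℂ E₂]
    (L : LatticeNorm A E) (L₁ : LatticeNorm A E₁) (L₂ : LatticeNorm A E₂)
    (m : E →ₗ[ℂ] E₁ →ₗ[ℂ] E₂)
    (hm : ∀ (x : E) (y : E₁), L₂.val (m x y) ≤ L.val x * L₁.val y)
    (M : Set E) (N : Set E₁) :
    (L.TotallyOrderBounded M → L₁.TotallyOrderBounded N →
      L₂.TotallyOrderBounded (Set.image2 (fun a b => m a b) M N)) ∧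
    (L.UnifTotallyOrderBounded M → L₁.UnifTotallyOrderBounded N →
      L₂.UnifTotallyOrderBounded (Set.image2 (fun a b => m a b) M N)) := by
  classical
  have hO : IsOrderedRing A := isOrderedRing_of_starOrdered
  constructor
  · rintro ⟨ι, _, _, _, u, hu, hM⟩ ⟨κ, _, _, _, v, hv, hN⟩
    obtain ⟨U, hU, hMU⟩ : L.OrderBounded M := by
      obtain ⟨F, -, hF⟩ := hM (Classical.arbitrary ι)
      exact L.orderBounded_of_infDistLE (hu.1 _) hF
    obtain ⟨V, hV, hNV⟩ : L₁.OrderBounded N := by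
      obtain ⟨G, -, hG⟩ := hN (Classical.arbitrary κ)
      exact L₁.orderBounded_of_infDistLE (hv.1 _) hG
    have hdir : IsDirected (ι × κ) (· ≤ ·) := by
      refine ⟨fun i j => ?_⟩
      obtain ⟨p, hp, hp'⟩ := directed_of (· ≤ ·) i.1 j.1
      obtain ⟨q, hq, hq'⟩ := directed_of (· ≤ ·) i.2 j.2
      exact ⟨(p, q), ⟨hp, hq⟩, ⟨hp', hq'⟩⟩
    refine ⟨ι × κ, inferInstance, hdir, inferInstance, _,
      LatticeNorm.decrToZero_prod hu hv hU hV, ?_⟩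
    rintro ⟨i, k⟩
    obtain ⟨F, hFn, hF⟩ := hM i
    obtain ⟨G, hGn, hG⟩ := hN k
    refine ⟨Finset.image₂ (fun y z => m y z) F G, Finset.image₂_nonempty_iff.2 ⟨hFn, hGn⟩, ?_⟩
    rintro _ ⟨a, ha, b, hb, rfl⟩
    convert LatticeNorm.infDistLE_image2 L L₁ L₂ m hm hFn hGn (hMU a ha) (hNV b hb)
      (hF a ha) (hG b hb)
  · intro hM hN ε hε
    obtain ⟨U, hU, hMU⟩ : L.OrderBounded M := by
      obtain ⟨F, -, hF⟩ := hM 1 one_pos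
      exact L.orderBounded_of_infDistLE (algebraMap_ofReal_nonneg zero_le_one) hF
    obtain ⟨V, hV, hNV⟩ : L₁.OrderBounded N := by
      obtain ⟨G, -, hG⟩ := hN 1 one_pos
      exact L₁.orderBounded_of_infDistLE (algebraMap_ofReal_nonneg zero_le_one) hG
    obtain ⟨c, hc, hUc⟩ := exists_le_algebraMap_ofReal hU
    obtain ⟨d, hd, hVd⟩ := exists_le_algebraMap_ofReal hV
    -- With `δ ≤ 1`, the distance bound `δ d + c δ + δ δ` is at most `δ (c + d + 1) ≤ ε`.
    obtain ⟨δ, hδ, hδε⟩ : ∃ δ : ℝ, 0 < δ ∧ δ * d + c * δ + δ * δ ≤ ε := by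
      refine ⟨min 1 (ε / (c + d + 1)), by positivity, ?_⟩
      set δ := min 1 (ε / (c + d + 1))
      have h0 : 0 < δ := by positivity
      have h1 : δ ≤ 1 := min_le_left _ _
      have h2 : δ * (c + d + 1) ≤ ε := (le_div_iff₀ (by positivity)).1 (min_le_right _ _)
      nlinarith
    obtain ⟨F, hFn, hF⟩ := hM δ hδ
    obtain ⟨G, hGn, hG⟩ := hN δ hδ
    refine ⟨Finset.image₂ (fun y z => m y z) F G, Finset.image₂_nonempty_iff.2 ⟨hFn, hGn⟩, ?_⟩
    rintro _ ⟨a, ha, b, hb, rfl⟩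
    obtain ⟨w, hw, hle⟩ := LatticeNorm.infDistLE_image2 L L₁ L₂ m hm hFn hGn
      ((hMU a ha).trans hUc) ((hNV b hb).trans hVd)
      (hF a ha) (hG b hb)
    refine ⟨w, by convert hw, hle.trans ?_⟩
    rw [← sub_nonneg]
    have h := algebraMap_ofReal_nonneg (A := A) (sub_nonneg.2 hδε)
    simpa using h
end
end

section
/- Let E be a lattice-normed space over a Stone algebra A and M ⊆ E. If M is order-bounded, then its order-closure ocl(M) is order-bounded; if M is totally order-bounded, then ocl(M) is totally order-bounded; if M is uniformly totally order-bounded, then ocl(M) is uniformly totally order-bounded. -/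
/-!
All three claims follow from the fact that the sets `{x | |x| ≤ f}` and
`{x | inf_{y ∈ F} |x - y| ≤ u}` (with `F` finite and nonempty) are order-closed: once such a set
contains `M`, it contains `ocl M` (`ocl_subset`), so the bounds and finite sets that work for `M`
work unchanged for `ocl M`.

For the second kind of set (`orderClosed_infDistLE`), let `x_i → x₀` in order, dominated by
`w_k ↓ 0`. From `|x₀ - y| ≤ |x_i - x₀| + |x_i - y|`, taking infima over `y ∈ F` gives
`inf_y |x₀ - y| ≤ w_k + u` for every `k`, hence `inf_y |x₀ - y| ≤ u` because `inf_k w_k = 0`.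
Order-completeness of `A` is used only for the existence of the infimum at `x₀`.
-/

noncomputable section

open scoped Pointwise

set_option linter.unusedSectionVars false

namespace LatticeNorm

variable {A : Type*} [NormedCommRing A] [StarRing A] [CStarRing A]
  [NormedAlgebra ℂ A] [CompleteSpace A] [PartialOrder A] [StarOrderedRing A]
  {E : Type*} [AddCommGroup E] [Module ℂ E] (L : LatticeNorm A E)

lemma val_neg_s4 (x : E) : L.val (-x) = L.val x := by
  have h := L.val_smul (-1) x
  simpa using h

lemma val_sub_comm (x y : E) : L.val (x - y) = L.val (y - x) := by
  rw [← L.val_neg_s4, neg_sub]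

lemma ocl_subset {M S : Set E} (hMS : M ⊆ S) (hS : L.OrderClosed S) : L.ocl M ⊆ S :=
  Set.sInter_subset_of_mem ⟨hMS, hS⟩

lemma le_of_forall_le_add {κ : Type} [Preorder κ] {w : κ → A} (hw : DecrToZero w) {a b : A}
    (h : ∀ k, a ≤ w k + b) : a ≤ b := by
  have : a - b ≤ 0 := hw.2.2.2 (by
    rintro _ ⟨k, rfl⟩
    exact sub_le_iff_le_add.2 (h k))
  exact sub_nonpos.1 this

lemma orderClosed_val_le (f : A) : L.OrderClosed {x | L.val x ≤ f} := by
  intro ι _ _ _ x x₀ hx ⟨κ, _, _, _, w, hw, hconv⟩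
  refine le_of_forall_le_add hw fun k => ?_
  obtain ⟨i, hi⟩ := hconv k
  calc L.val x₀ = L.val ((x₀ - x i) + x i) := by rw [sub_add_cancel]
    _ ≤ L.val (x₀ - x i) + L.val (x i) := L.val_add_le _ _
    _ ≤ w k + f := add_le_add (L.val_sub_comm x₀ (x i) ▸ hi i le_rfl) (hx i)

lemma orderClosed_infDistLE [StoneAlgebra A] {F : Finset E} (hF : F.Nonempty) (u : A) :
    L.OrderClosed {x | L.infDistLE x F u} := by
  intro ι _ _ _ x x₀ hx ⟨κ, _, _, _, w, hw, hconv⟩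
  obtain ⟨v, hv⟩ := StoneAlgebra.exists_isGLB
    ((fun y => L.val (x₀ - y)) '' (F : Set E)) (hF.to_set.image _)
    ⟨0, by rintro _ ⟨y, -, rfl⟩; exact L.nonneg _⟩
  refine ⟨v, hv, le_of_forall_le_add hw fun k => ?_⟩
  obtain ⟨i, hi⟩ := hconv k
  obtain ⟨v', hv', hv'u⟩ := hx i
  have hle : v - w k ≤ v' := hv'.2 (by
    rintro _ ⟨y, hy, rfl⟩
    refine sub_le_iff_le_add'.2 ?_
    calc v ≤ L.val (x₀ - y) := hv.1 ⟨y, hy, rfl⟩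
      _ = L.val ((x₀ - x i) + (x i - y)) := by rw [sub_add_sub_cancel]
      _ ≤ L.val (x₀ - x i) + L.val (x i - y) := L.val_add_le _ _
      _ ≤ w k + L.val (x i - y) :=
        add_le_add_left (L.val_sub_comm x₀ (x i) ▸ hi i le_rfl) _)
  exact sub_le_iff_le_add'.1 (hle.trans hv'u)

end LatticeNorm

/-- The order-closure of an order-bounded (resp. (uniformly) totally
order-bounded) set is order-bounded (resp. (uniformly) totally order-bounded). -/
theorem ocl_totallyOrderBounded
    {A : Type*} [NormedCommRing A] [StarRing A] [CStarRing A] [NormedAlgebra ℂ A]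
    [CompleteSpace A] [PartialOrder A] [StarOrderedRing A] [StoneAlgebra A]
    {E : Type*} [AddCommGroup E] [Module ℂ E]
    (L : LatticeNorm A E) (M : Set E) :
    (L.OrderBounded M → L.OrderBounded (L.ocl M)) ∧
    (L.TotallyOrderBounded M → L.TotallyOrderBounded (L.ocl M)) ∧
    (L.UnifTotallyOrderBounded M → L.UnifTotallyOrderBounded (L.ocl M)) := by
  refine ⟨?_, ?_, ?_⟩
  · rintro ⟨f, hf, hM⟩
    exact ⟨f, hf, L.ocl_subset hM (L.orderClosed_val_le f)⟩
  · rintro ⟨ι, _, hd, hne, u, hu, hM⟩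
    refine ⟨ι, _, hd, hne, u, hu, fun i => ?_⟩
    obtain ⟨F, hF, hMF⟩ := hM i
    exact ⟨F, hF, L.ocl_subset hMF (L.orderClosed_infDistLE hF _)⟩
  · intro hM ε hε
    obtain ⟨F, hF, hMF⟩ := hM ε hε
    exact ⟨F, hF, L.ocl_subset hMF (L.orderClosed_infDistLE hF _)⟩
end
end

section
/- Let E be a lattice-normed module over a Stone algebra A, let r > 0 be real, and let M ⊆ B_E[0;r·1]. Then for each finite set F ⊆ E there is a finite set F' ⊆ B_E[0;2r·1] with #F' ≤ #F and inf_{y'∈F'} |x−y'| ≤ inf_{y∈F} |x−y| for every x ∈ M. Consequently, in the definitions of totally order-bounded and uniformly totally order-bounded subsets of B_E[0;r·1], the finite sets F may be taken inside B_E[0;2r·1]. -/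
/-!
Each point `y` of a finite set is replaced by `p • y`, where `p` is an idempotent of `A` with
`p |y| ≤ 2r p` and `2r (1 - p) ≤ (1 - p) |y|`. Then `|p • y| = p |y| ≤ 2r`, and for `|x| ≤ r` the
split `x - p • y = p • (x - y) + (1 - p) • x` gives `|x - p • y| ≤ p |x - y| + (1 - p) |x|`. On the
range of `1 - p` one has `|x| ≤ r ≤ |y| - |x| ≤ |x - y|`, so `|x - p • y| ≤ |x - y|`
(`exists_replacement`). Order completeness makes the infimum over the replaced set exist.

The idempotent comes from order completeness alone, without passing to the Gelfand space: with
`|y| - 2r = c (a - b)`, where `a`, `b` lie in the unit interval and `a b = 0`, the supremum `q` of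
all `h` in the unit interval with `h b = 0` is an idempotent with `q a = a` and `q b = 0`
(`exists_idempotent_separating`), and `p = 1 - q`.

The decomposition into disjoint parts uses the continuous functional calculus, which requires
`star` to be conjugate-linear over `ℂ`; this is a consequence of the star ordering
(`starModule_complex`).
-/

noncomputable section

open scoped Pointwise

/-- `L` is the lattice norm of a lattice-normed *module* over `A`: `|a • x| = |a| |x|`,
where the modulus `|a|` is characterized as the positive square root `b` of `star a * a`. -/
def LatticeNorm.IsModuleNorm {A : Type*} [NormedCommRing A] [StarRing A] [CStarRing A]
    [NormedAlgebra ℂ A] [CompleteSpace A] [PartialOrder A] [StarOrderedRing A]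
    {E : Type*} [AddCommGroup E] [Module ℂ E] [Module A E]
    (L : LatticeNorm A E) : Prop :=
  ∀ (a : A) (x : E) (b : A), 0 ≤ b → b * b = star a * a → L.val (a • x) = b * L.val x

theorem isOrderedRing_of_star {A : Type*} [CommRing A] [StarRing A] [PartialOrder A]
    [StarOrderedRing A] : IsOrderedRing A := by
  have hmul : ∀ a b : A, 0 ≤ a → 0 ≤ b → 0 ≤ a * b := by
    intro a b ha hb
    rw [StarOrderedRing.nonneg_iff] at hb
    induction hb using AddSubmonoid.closure_induction with
    | mem x hx =>
      obtain ⟨s, rfl⟩ := hx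
      have := star_left_conjugate_nonneg ha s
      convert this using 1
      ring
    | zero => simp
    | add x y _ _ hx hy => rw [mul_add]; exact add_nonneg hx hy
  have h1 : (0 : A) ≤ 1 := by simp
  have : ZeroLEOneClass A := ⟨h1⟩
  exact IsOrderedRing.of_mul_nonneg hmul

/-- Support projection: disjoint elements `a`, `b` of the unit interval of an order-complete
commutative ordered ring are separated by an idempotent. It is the supremum of all elements of
the unit interval annihilated by `b`. -/
theorem exists_idempotent_separating {A : Type*} [CommRing A] [PartialOrder A] [IsOrderedRing A]
    (hcomp : ∀ S : Set A, S.Nonempty → BddBelow S → ∃ v, IsGLB S v)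
    (a b : A) (ha0 : 0 ≤ a) (ha1 : a ≤ 1) (hb0 : 0 ≤ b) (hb1 : b ≤ 1) (hab : a * b = 0) :
    ∃ q : A, 0 ≤ q ∧ q ≤ 1 ∧ q * q = q ∧ q * a = a ∧ q * b = 0 := by
  obtain ⟨q, hq⟩ : ∃ q, IsLUB {h : A | 0 ≤ h ∧ h ≤ 1 ∧ h * b = 0} q := by
    obtain ⟨v, hv⟩ := hcomp (-{h : A | 0 ≤ h ∧ h ≤ 1 ∧ h * b = 0}) ⟨0, by simp⟩
      ⟨-1, fun x hx => neg_le.1 hx.2.1⟩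
    exact ⟨-v, by simpa using hv.neg⟩
  have hq0 : 0 ≤ q := hq.1 ⟨le_rfl, zero_le_one, zero_mul b⟩
  have hq1 : q ≤ 1 := hq.2 fun x hx => hx.2.1
  -- `q * (1 - b)` is again an upper bound, since `h = h * (1 - b)` for each competitor `h`
  have hqb : q * b = 0 := by
    refine le_antisymm ?_ (mul_nonneg hq0 hb0)
    have : q ≤ q * (1 - b) := hq.2 fun h hh => by
      have h1 := mul_le_mul_of_nonneg_right (hq.1 hh) (sub_nonneg.2 hb1)
      rwa [mul_sub, hh.2.2, mul_one, sub_zero] at h1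
    rw [mul_sub, mul_one] at this
    simpa using this
  -- the competitors are closed under `(h, k) ↦ 1 - (1 - h) * (1 - k)`
  have key : ∀ k : A, 0 ≤ k → k ≤ 1 → k * b = 0 → k * q = k := by
    intro k hk0 hk1 hkb
    have h1 : 0 ≤ (1 - q) * (1 - k) := mul_nonneg (sub_nonneg.2 hq1) (sub_nonneg.2 hk1)
    have h2 : 0 ≤ k * (1 - q) := mul_nonneg hk0 (sub_nonneg.2 hq1)
    have h3 : q + k * (1 - q) ≤ q := hq.1 ⟨add_nonneg hq0 h2, by
      rw [← sub_nonneg]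
      convert h1 using 1
      ring, by linear_combination (1 - k) * hqb + hkb⟩
    have h4 : k * (1 - q) = 0 := le_antisymm (by simpa using h3) h2
    linear_combination -h4
  exact ⟨q, hq0, hq1, key q hq0 hq1 hqb, by rw [mul_comm]; exact key a ha0 ha1 hab, hqb⟩

/-- The positive and negative parts of a self-adjoint element, scaled into the unit interval. -/
theorem exists_disjoint_parts {A : Type*} [CommCStarAlgebra A] [PartialOrder A]
    [StarOrderedRing A] (g : A) (hg : IsSelfAdjoint g) :
    ∃ a b c : A, 0 ≤ a ∧ a ≤ 1 ∧ 0 ≤ b ∧ b ≤ 1 ∧ a * b = 0 ∧ 0 ≤ c ∧ g = c * (a - b) := by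
  obtain ⟨C, hC⟩ : ∃ C : ℝ, C = ‖g⁺‖ + ‖g⁻‖ + 1 := ⟨_, rfl⟩
  have hC0 : 0 < C := by rw [hC]; positivity
  have hp := CFC.posPart_nonneg g
  have hn := CFC.negPart_nonneg g
  have hle : ∀ x : A, 0 ≤ x → ‖x‖ ≤ C → C⁻¹ • x ≤ 1 := by
    intro x hx hxC
    have h1 : x ≤ algebraMap ℝ A ‖x‖ :=
      IsSelfAdjoint.le_algebraMap_norm_self (IsSelfAdjoint.of_nonneg hx)
    have h2 : algebraMap ℝ A ‖x‖ ≤ algebraMap ℝ A C := algebraMap_mono A hxC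
    have h3 := smul_le_smul_of_nonneg_left (h1.trans h2) (inv_nonneg.2 hC0.le)
    rwa [Algebra.algebraMap_eq_smul_one, smul_smul, inv_mul_cancel₀ hC0.ne', one_smul] at h3
  refine ⟨C⁻¹ • g⁺, C⁻¹ • g⁻, algebraMap ℝ A C, smul_nonneg (inv_nonneg.2 hC0.le) hp,
    hle _ hp (by rw [hC]; linarith [norm_nonneg (g⁻)]), smul_nonneg (inv_nonneg.2 hC0.le) hn,
    hle _ hn (by rw [hC]; linarith [norm_nonneg (g⁺)]), ?_, algebraMap_nonneg A hC0.le, ?_⟩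
  · rw [smul_mul_smul_comm, CFC.posPart_mul_negPart, smul_zero]
  · rw [← smul_sub, CFC.posPart_sub_negPart g hg, ← Algebra.smul_def, smul_smul,
      mul_inv_cancel₀ hC0.ne', one_smul]

/-- The idempotent `p` plays the role of the indicator of the interior of `{f ≤ s}`. -/
theorem exists_cutoff {A : Type*} [NormedCommRing A] [StarRing A] [CStarRing A]
    [NormedAlgebra ℂ A] [CompleteSpace A] [PartialOrder A] [StarOrderedRing A] [StoneAlgebra A]
    (f : A) (hf : 0 ≤ f) (s : ℝ) (hs : 0 ≤ s) :
    0 ≤ algebraMap ℂ A (s : ℂ) ∧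
    ∃ p : A, 0 ≤ p ∧ p ≤ 1 ∧ p * p = p ∧ p * f ≤ p * algebraMap ℂ A (s : ℂ) ∧
      (1 - p) * algebraMap ℂ A (s : ℂ) ≤ (1 - p) * f := by
  have : StarModule ℂ A := starModule_complex
  have : IsOrderedRing A := isOrderedRing_of_star
  let : CommCStarAlgebra A := {}
  have hs' : 0 ≤ algebraMap ℂ A (s : ℂ) := by
    have h : 0 ≤ algebraMap ℝ A s := algebraMap_nonneg A hs
    rwa [IsScalarTower.algebraMap_apply ℝ ℂ A, Complex.coe_algebraMap] at h
  refine ⟨hs', ?_⟩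
  obtain ⟨a, b, c, ha0, ha1, hb0, hb1, hab, hc, hg⟩ :=
    exists_disjoint_parts (f - algebraMap ℂ A (s : ℂ))
      ((IsSelfAdjoint.of_nonneg hf).sub (IsSelfAdjoint.of_nonneg hs'))
  obtain ⟨q, hq0, hq1, hqq, hqa, hqb⟩ := exists_idempotent_separating
    StoneAlgebra.exists_isGLB a b ha0 ha1 hb0 hb1 hab
  refine ⟨1 - q, sub_nonneg.2 hq1, sub_le_self 1 hq0, by linear_combination hqq, ?_, ?_⟩
  · rw [← sub_nonneg]
    convert mul_nonneg hc hb0 using 1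
    linear_combination -(1 - q) * hg + c * hqa - c * hqb
  · rw [← sub_nonneg]
    convert mul_nonneg hc ha0 using 1
    linear_combination q * hg + c * hqa - c * hqb

/-- Cutting `y` off by an idempotent: the cut-off is no worse as an approximation of any element
of the ball of radius `r`. Where `|y| ≤ 2r` nothing changes; elsewhere
`|x - 0| ≤ r ≤ |y| - |x| ≤ |x - y|`. -/
theorem exists_replacement
    {A : Type*} [NormedCommRing A] [StarRing A] [CStarRing A] [NormedAlgebra ℂ A]
    [CompleteSpace A] [PartialOrder A] [StarOrderedRing A] [StoneAlgebra A]
    {E : Type*} [AddCommGroup E] [Module ℂ E] [Module A E]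
    (L : LatticeNorm A E) (hLmod : L.IsModuleNorm) (r : ℝ) (hr : 0 < r) (y : E) :
    ∃ y' : E, L.val y' ≤ algebraMap ℂ A ((2 * r : ℝ) : ℂ) ∧
      ∀ x : E, L.val x ≤ algebraMap ℂ A (r : ℂ) → L.val (x - y') ≤ L.val (x - y) := by
  have : IsOrderedRing A := isOrderedRing_of_star
  obtain ⟨h2r, p, hp0, hp1, hpp, hpf, hqf⟩ :=
    exists_cutoff (L.val y) (L.nonneg y) (2 * r) (by positivity)
  have hidem : ∀ e : A, 0 ≤ e → e * e = e → ∀ x : E, L.val (e • x) = e * L.val x :=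
    fun e he hee x => hLmod e x e he (by rw [(IsSelfAdjoint.of_nonneg he).star_eq])
  have hq0 : 0 ≤ 1 - p := sub_nonneg.2 hp1
  have hqq : (1 - p) * (1 - p) = 1 - p := by linear_combination hpp
  refine ⟨p • y, ?_, fun x hx => ?_⟩
  · rw [hidem p hp0 hpp]
    exact hpf.trans (mul_le_of_le_one_left h2r hp1)
  · have hsplit : x - p • y = p • (x - y) + (1 - p) • x := by
      rw [smul_sub, sub_smul, one_smul]; abel
    have hneg : L.val (y - x) = L.val (x - y) := by
      rw [← neg_sub x y, ← neg_one_smul ℂ (x - y), L.val_smul]; simp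
    have htri : L.val y ≤ L.val x + L.val (x - y) := by
      have := L.val_add_le x (y - x)
      rwa [add_sub_cancel, hneg] at this
    have h2 : algebraMap ℂ A ((2 * r : ℝ) : ℂ) =
        algebraMap ℂ A (r : ℂ) + algebraMap ℂ A (r : ℂ) := by
      rw [two_mul, Complex.ofReal_add, map_add]
    have hx' := mul_le_mul_of_nonneg_left hx hq0
    have ht' := mul_le_mul_of_nonneg_left htri hq0
    rw [h2, mul_add] at hqf
    rw [mul_add] at ht'
    have hq : (1 - p) * L.val x ≤ (1 - p) * L.val (x - y) := by
      have h5 := (add_le_add hx' hx').trans (hqf.trans ht')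
      exact le_of_add_le_add_left h5
    calc L.val (x - p • y) ≤ L.val (p • (x - y)) + L.val ((1 - p) • x) := by
          rw [hsplit]; exact L.val_add_le _ _
      _ = p * L.val (x - y) + (1 - p) * L.val x := by
          rw [hidem p hp0 hpp, hidem _ hq0 hqq]
      _ ≤ p * L.val (x - y) + (1 - p) * L.val (x - y) := by gcongr
      _ = L.val (x - y) := by ring

/-- In a lattice-normed module, for subsets of the ball `B_E[0; r·1]`
the approximating finite sets may be chosen inside `B_E[0; 2r·1]`. -/
theorem approx_in_ball
    {A : Type*} [NormedCommRing A] [StarRing A] [CStarRing A] [NormedAlgebra ℂ A]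
    [CompleteSpace A] [PartialOrder A] [StarOrderedRing A] [StoneAlgebra A]
    {E : Type*} [AddCommGroup E] [Module ℂ E] [Module A E] [IsScalarTower ℂ A E]
    (L : LatticeNorm A E) (hLmod : L.IsModuleNorm)
    (r : ℝ) (hr : 0 < r) (M : Set E)
    (hM : M ⊆ { x : E | L.val x ≤ algebraMap ℂ A (r : ℂ) }) :
    (∀ F : Finset E, ∃ F' : Finset E,
      (F' : Set E) ⊆ { y : E | L.val y ≤ algebraMap ℂ A ((2 * r : ℝ) : ℂ) } ∧
      F'.card ≤ F.card ∧
      ∀ x ∈ M, ∀ u : A, L.infDistLE x F u → L.infDistLE x F' u) ∧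
    (L.TotallyOrderBounded M ↔
      ∃ (ι : Type) (_ : Preorder ι) (_ : IsDirected ι (· ≤ ·)) (_ : Nonempty ι) (u : ι → A),
        LatticeNorm.DecrToZero (A := A) u ∧
        ∀ i, ∃ F : Finset E, F.Nonempty ∧
          (F : Set E) ⊆ { y : E | L.val y ≤ algebraMap ℂ A ((2 * r : ℝ) : ℂ) } ∧
          ∀ x ∈ M, L.infDistLE x F (u i)) ∧
    (L.UnifTotallyOrderBounded M ↔
      ∀ ε : ℝ, 0 < ε → ∃ F : Finset E, F.Nonempty ∧
        (F : Set E) ⊆ { y : E | L.val y ≤ algebraMap ℂ A ((2 * r : ℝ) : ℂ) } ∧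
        ∀ x ∈ M, L.infDistLE x F (algebraMap ℂ A (ε : ℂ))) := by
  classical
  choose φ hφ hφx using exists_replacement L hLmod r hr
  have hsub : ∀ F : Finset E, ((F.image φ : Finset E) : Set E) ⊆
      { y : E | L.val y ≤ algebraMap ℂ A ((2 * r : ℝ) : ℂ) } := by
    intro F z hz
    obtain ⟨y, -, rfl⟩ := Finset.mem_image.1 (Finset.mem_coe.1 hz)
    exact hφ y
  have hdist : ∀ (F : Finset E), ∀ x ∈ M, ∀ u : A,
      L.infDistLE x F u → L.infDistLE x (F.image φ) u := by
    rintro F x hx u ⟨v, hv, hvu⟩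
    rcases F.eq_empty_or_nonempty with rfl | ⟨y₀, hy₀⟩
    · exact ⟨v, by simpa using hv, hvu⟩
    · obtain ⟨w, hw⟩ := StoneAlgebra.exists_isGLB
        ((fun y => L.val (x - y)) '' ((F.image φ : Finset E) : Set E))
        ⟨_, φ y₀, Finset.mem_coe.2 (Finset.mem_image_of_mem φ hy₀), rfl⟩
        ⟨0, by rintro _ ⟨y, -, rfl⟩; exact L.nonneg _⟩
      refine ⟨w, hw, le_trans (hv.2 ?_) hvu⟩
      rintro _ ⟨y, hy, rfl⟩
      exact (hw.1 ⟨φ y, Finset.mem_coe.2 (Finset.mem_image_of_mem φ hy), rfl⟩).trans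
        (hφx y x (hM hx))
  refine ⟨fun F => ⟨F.image φ, hsub F, Finset.card_image_le, hdist F⟩, ⟨?_, ?_⟩, ⟨?_, ?_⟩⟩
  · rintro ⟨ι, h1, h2, h3, u, hu, h⟩
    refine ⟨ι, h1, h2, h3, u, hu, fun i => ?_⟩
    obtain ⟨F, hF, hFx⟩ := h i
    exact ⟨F.image φ, hF.image φ, hsub F, fun x hx => hdist F x hx _ (hFx x hx)⟩
  · rintro ⟨ι, h1, h2, h3, u, hu, h⟩
    refine ⟨ι, h1, h2, h3, u, hu, fun i => ?_⟩
    obtain ⟨F, hF, -, hFx⟩ := h i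
    exact ⟨F, hF, hFx⟩
  · intro h ε hε
    obtain ⟨F, hF, hFx⟩ := h ε hε
    exact ⟨F.image φ, hF.image φ, hsub F, fun x hx => hdist F x hx _ (hFx x hx)⟩
  · intro h ε hε
    obtain ⟨F, hF, -, hFx⟩ := h ε hε
    exact ⟨F, hF, hFx⟩
end
end

section
/- Let E be a Kaplansky–Hilbert module over a Stone algebra A possessing a finite suborthonormal basis e₁,…,e_d, i.e., ⟨e_i,e_j⟩ = 0 for i ≠ j, each p_j := ⟨e_j,e_j⟩ is an idempotent of A, and every f ∈ E can be written as f = Σ_{j=1}^d λ_j e_j with λ_j ∈ p_j·A. Then for a subset M ⊆ E the following are equivalent: (i) M is order-bounded; (ii) M is totally order-bounded; (iii) M is uniformly totally order-bounded. -/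
/-! The implications form a cycle.

* Uniformly totally order-bounded ⇒ totally order-bounded: the sequence `1/(n+1)`
  decreases to `0` in `A`, because the positive cone is closed.
* Totally order-bounded ⇒ order-bounded: one finite set `F` suffices, as
  `|x| ≤ |x - y| + ∑_{z ∈ F} |z|` for all `y ∈ F`.
* Order-bounded ⇒ uniformly totally order-bounded: by the Gelfand transform,
  inequalities in `A` can be tested on characters `χ`.
  Orthogonality gives `|∑ μ_j e_j|² = ∑ μ_j μ_j^* p_j`. Hence, if `|x| ≤ f` and
  `x = ∑ λ_j e_j`, the values `χ(λ_j)` with `χ(p_j) = 1` lie in a fixed disc of `ℂ`, independent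
  of `χ` and of `x`. With `G` a finite `δ`-net of this disc, the finite set of all `∑ g_j e_j`,
  `g_j ∈ G`, works: the infimum `v` of the `|x - y|` exists by order-completeness, and for every `χ`
  the choice of `g_j ∈ G` close to `χ(λ_j)` (which may depend on `χ`) shows `χ(v)² ≤ d δ²`.

The hypotheses on `A` do not include `StarModule ℂ A`, which Gelfand theory needs; it is a
consequence of the star-order, because `star i * i` is a positive square root of `1`. -/

noncomputable section

open scoped Pointwise

/-- `E` is order-complete: every (bounded) order-Cauchy net order-converges. -/
def LatticeNorm.OrderComplete {A : Type*} [NormedCommRing A] [StarRing A] [CStarRing A]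
    [NormedAlgebra ℂ A] [CompleteSpace A] [PartialOrder A] [StarOrderedRing A]
    {E : Type*} [AddCommGroup E] [Module ℂ E] (L : LatticeNorm A E) : Prop :=
  ∀ (ι : Type) (_ : Preorder ι) (_ : IsDirected ι (· ≤ ·)) (_ : Nonempty ι) (x : ι → E),
    (∃ (κ : Type) (_ : Preorder κ) (_ : IsDirected κ (· ≤ ·)) (_ : Nonempty κ) (u : κ → A),
      LatticeNorm.DecrToZero (A := A) u ∧
      ∀ k, ∃ i₀, ∀ i ≥ i₀, ∀ j ≥ i₀, L.val (x i - x j) ≤ u k) →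
    ∃ x₀ : E, L.OrderConv x x₀

/-- An `A`-sesquilinear inner product on the lattice-normed module `E`
satisfying `⟨x,x⟩ = |x|²`. -/
structure KHForm {A : Type*} [NormedCommRing A] [StarRing A] [CStarRing A]
    [NormedAlgebra ℂ A] [CompleteSpace A] [PartialOrder A] [StarOrderedRing A]
    {E : Type*} [AddCommGroup E] [Module ℂ E] [Module A E]
    (L : LatticeNorm A E) where
  inner : E → E → A
  inner_add_left : ∀ x y z, inner (x + y) z = inner x z + inner y z
  inner_smul_left : ∀ (a : A) (x y : E), inner (a • x) y = a * inner x y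
  inner_conj_symm : ∀ x y, star (inner x y) = inner y x
  inner_self : ∀ x, inner x x = L.val x * L.val x

/-! ### Characters and the order of a commutative C*-algebra -/

section CStar

open WeakDual

set_option linter.unusedSectionVars false

variable {A : Type*} [NormedCommRing A] [StarRing A] [CStarRing A]
  [NormedAlgebra ℂ A] [CompleteSpace A] [PartialOrder A] [StarOrderedRing A]

/-- If `b` is a positive square root of `1`, then `q = 1 - b` satisfies `b q = -q`, so
`q² ≥ 0` and `-q² = q b q ≥ 0`; hence `q² = 0`, and `2q = q²`. -/
lemma eq_one_of_nonneg_of_mul_self_eq_one {b : A} (hb : 0 ≤ b) (h : b * b = 1) :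
    b = 1 := by
  have hbs : star b = b := (IsSelfAdjoint.of_nonneg hb).star_eq
  have hpos : 0 ≤ star (1 - b) * (1 - b) := star_mul_self_nonneg _
  have hneg : 0 ≤ star (1 - b) * b * (1 - b) := star_left_conjugate_nonneg hb _
  have e1 : star (1 - b) * b * (1 - b) = -(star (1 - b) * (1 - b)) := by
    rw [star_sub, star_one, hbs]
    linear_combination (b - 1) * h
  have h0 : star (1 - b) * (1 - b) = 0 :=
    le_antisymm (by rw [e1] at hneg; exact neg_nonneg.mp hneg) hpos
  have h2 : (algebraMap ℂ A 2) * (1 - b) = 0 := by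
    rw [star_sub, star_one, hbs] at h0
    rw [map_ofNat]
    linear_combination h0 - h
  have h3 : 1 - b = 0 := by
    have := congrArg (fun z => algebraMap ℂ A (2⁻¹) * z) h2
    simpa [← mul_assoc, ← map_mul] using this
  exact (sub_eq_zero.mp h3).symm

/-- Compatibility of the involution with complex conjugation of scalars is automatic. -/
lemma starModule_complex_s9 : StarModule ℂ A := by
  set j : A := algebraMap ℂ A Complex.I with hj
  have hjj : j * j = -1 := by rw [hj, ← map_mul, Complex.I_mul_I]; simp
  have hsjj : star j * star j = -1 := by rw [← star_mul, hjj]; simp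
  have hone : star j * j = 1 :=
    eq_one_of_nonneg_of_mul_self_eq_one (star_mul_self_nonneg j)
      (by linear_combination (star j * star j) * hjj - hsjj)
  have hsj : star j = -j := by linear_combination (star j) * hjj - j * hone
  -- An additive continuous map is real-linear.
  have hreal : ∀ (r : ℝ) (x : A), star (r • x) = r • star x := fun r x =>
    map_real_smul (starAddEquiv : A ≃+ A) continuous_star r x
  have hre : ∀ r : ℝ, star (algebraMap ℂ A (r : ℂ)) = algebraMap ℂ A (r : ℂ) := by
    intro r
    have := hreal r 1
    rw [star_one] at this
    simpa [Algebra.algebraMap_eq_smul_one] using this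
  have halg : ∀ c : ℂ, star (algebraMap ℂ A c) = algebraMap ℂ A (star c) := by
    intro c
    conv_lhs => rw [← Complex.re_add_im c]
    have : star c = (c.re : ℂ) - c.im * Complex.I := by
      apply Complex.ext <;> simp
    rw [this, map_add, map_sub, map_mul, star_add, star_mul, hre, hre, ← hj, hsj]
    ring
  refine ⟨fun c x => ?_⟩
  rw [Algebra.smul_def, Algebra.smul_def, star_mul, halg, mul_comm]

/-- A character preserves the involution. -/
lemma char_star (χ : characterSpace ℂ A) (a : A) : χ (star a) = star (χ a) := by
  have : StarModule ℂ A := starModule_complex_s9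
  let _ : CommCStarAlgebra A := {}
  exact map_star χ a

open ComplexOrder in
lemma char_nonneg (χ : characterSpace ℂ A) {a : A} (ha : 0 ≤ a) :
    0 ≤ (χ a).re ∧ χ a = ((χ a).re : ℂ) := by
  have : StarModule ℂ A := starModule_complex_s9
  let _ : CommCStarAlgebra A := {}
  have h : 0 ≤ χ a := spectrum_nonneg_of_nonneg ha (AlgHom.apply_mem_spectrum χ a)
  rw [Complex.le_def] at h
  exact ⟨h.1, Complex.ext rfl h.2.symm⟩

lemma char_mono (χ : characterSpace ℂ A) {a b : A} (hab : a ≤ b) : (χ a).re ≤ (χ b).re := by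
  have := (char_nonneg χ (sub_nonneg.mpr hab)).1
  rw [map_sub, Complex.sub_re] at this
  linarith

open ComplexOrder in
/-- Positivity can be tested on characters. -/
lemma nonneg_of_char {a : A} (hs : IsSelfAdjoint a)
    (h : ∀ χ : characterSpace ℂ A, 0 ≤ (χ a).re) : 0 ≤ a := by
  have : StarModule ℂ A := starModule_complex_s9
  let _ : CommCStarAlgebra A := {}
  rw [StarOrderedRing.nonneg_iff_spectrum_nonneg (R := ℂ) a]
  intro z hz
  obtain ⟨χ, rfl⟩ := CharacterSpace.mem_spectrum_iff_exists.mp hz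
  have him : star (χ a) = χ a := by rw [← char_star, hs.star_eq]
  rw [Complex.le_def]
  exact ⟨h χ, (Complex.conj_eq_iff_im.mp him).symm⟩

lemma char_re_le (χ : characterSpace ℂ A) (a : A) : (χ a).re ≤ ‖a‖ * ‖(1 : A)‖ :=
  (Complex.re_le_norm _).trans
    (spectrum.norm_le_norm_mul_of_mem (AlgHom.apply_mem_spectrum χ a))

lemma algebraMap_real_nonneg {r : ℝ} (hr : 0 ≤ r) : 0 ≤ algebraMap ℂ A (r : ℂ) := by
  have hs : star (algebraMap ℂ A (r : ℂ)) = algebraMap ℂ A (r : ℂ) := by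
    have : StarModule ℂ A := starModule_complex_s9
    rw [← algebraMap_star_comm]; simp
  refine nonneg_of_char hs fun χ => ?_
  rw [AlgHomClass.commutes]
  simpa using hr

lemma le_algebraMap_of_char {a : A} (ha : 0 ≤ a) {r : ℝ} (hr : 0 ≤ r)
    (h : ∀ χ : characterSpace ℂ A, (χ a).re ≤ r) : a ≤ algebraMap ℂ A (r : ℂ) := by
  rw [← sub_nonneg]
  refine nonneg_of_char ((IsSelfAdjoint.of_nonneg (algebraMap_real_nonneg hr)).sub
    (IsSelfAdjoint.of_nonneg ha)) fun χ => ?_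
  rw [map_sub, AlgHomClass.commutes]
  simpa using h χ

/-- `1/(n+1)` decreases to zero in `A`. -/
lemma decrToZero_one_div :
    LatticeNorm.DecrToZero (A := A) (fun n : ℕ => algebraMap ℂ A ((1 / ((n : ℝ) + 1) : ℝ) : ℂ)) := by
  refine ⟨fun n => algebraMap_real_nonneg (by positivity), fun m n hmn => ?_, ?_, fun b hb => ?_⟩
  · rw [← sub_nonneg, ← map_sub, ← Complex.ofReal_sub]
    exact algebraMap_real_nonneg (sub_nonneg.mpr (Nat.one_div_le_one_div hmn))
  · rintro _ ⟨n, rfl⟩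
    exact algebraMap_real_nonneg (by positivity)
  · have hb' : ∀ n : ℕ, b ≤ algebraMap ℂ A ((1 / ((n : ℝ) + 1) : ℝ) : ℂ) := fun n => hb ⟨n, rfl⟩
    have hs : IsSelfAdjoint b := by
      have h1 : IsSelfAdjoint (algebraMap ℂ A ((1 / (((0 : ℕ) : ℝ) + 1) : ℝ) : ℂ)) :=
        IsSelfAdjoint.of_nonneg (algebraMap_real_nonneg (by positivity))
      simpa using h1.sub (IsSelfAdjoint.of_nonneg (sub_nonneg.mpr (hb' 0)))
    rw [← neg_nonneg]
    refine nonneg_of_char hs.neg fun χ => ?_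
    have hle : ∀ n : ℕ, (χ b).re ≤ 1 / ((n : ℝ) + 1) := fun n => by
      have := char_mono χ (hb' n)
      rw [AlgHomClass.commutes] at this
      exact this
    have := ge_of_tendsto' tendsto_one_div_add_atTop_nhds_zero_nat hle
    simpa using this

end CStar

/-! ### Boundedness in lattice-normed modules -/

section Module

open WeakDual

set_option linter.unusedSectionVars false

variable {A : Type*} [NormedCommRing A] [StarRing A] [CStarRing A]
  [NormedAlgebra ℂ A] [CompleteSpace A] [PartialOrder A] [StarOrderedRing A]
  {E : Type*} [AddCommGroup E] [Module ℂ E] {L : LatticeNorm A E}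

lemma unif_imp_totally {M : Set E} (h : L.UnifTotallyOrderBounded M) :
    L.TotallyOrderBounded M :=
  ⟨ℕ, inferInstance, inferInstance, inferInstance, _, decrToZero_one_div,
    fun n => h (1 / ((n : ℝ) + 1)) (by positivity)⟩

lemma totally_imp_bounded {M : Set E} (h : L.TotallyOrderBounded M) : L.OrderBounded M := by
  obtain ⟨ι, _, _, ⟨i⟩, u, hu, hF⟩ := h
  obtain ⟨F, -, hF⟩ := hF i
  have hsum : 0 ≤ ∑ z ∈ F, L.val z := Finset.sum_nonneg fun z _ => L.nonneg z
  refine ⟨u i + ∑ z ∈ F, L.val z, add_nonneg (hu.1 i) hsum, fun x hx => ?_⟩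
  obtain ⟨v, hv, hvu⟩ := hF x hx
  have hlow : L.val x - ∑ z ∈ F, L.val z ≤ v := hv.2 <| by
    rintro _ ⟨y, hy, rfl⟩
    have h1 : L.val x ≤ L.val (x - y) + L.val y := by
      simpa using L.val_add_le (x - y) y
    have h2 : L.val y ≤ ∑ z ∈ F, L.val z :=
      Finset.single_le_sum (f := L.val) (fun z _ => L.nonneg z) hy
    exact sub_le_iff_le_add.mpr (h1.trans (add_le_add le_rfl h2))
  exact sub_le_iff_le_add.mp (hlow.trans hvu)

variable [Module A E] (φ : KHForm L) {d : ℕ} {e : Fin d → E}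

lemma KHForm.inner_sum_left (s : Finset (Fin d)) (g : Fin d → E) (z : E) :
    φ.inner (∑ j ∈ s, g j) z = ∑ j ∈ s, φ.inner (g j) z :=
  map_sum (AddMonoidHom.mk' (fun x => φ.inner x z) fun x y => φ.inner_add_left x y z) g s

/-- Pythagoras: `|∑ μ_j e_j|² = ∑ μ_j μ_j^* p_j`. -/
lemma KHForm.val_sum_mul_self (horth : ∀ i j, i ≠ j → φ.inner (e i) (e j) = 0) (μ : Fin d → A) :
    L.val (∑ j, μ j • e j) * L.val (∑ j, μ j • e j) =
      ∑ j, μ j * star (μ j) * φ.inner (e j) (e j) := by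
  rw [← φ.inner_self, φ.inner_sum_left]
  refine Finset.sum_congr rfl fun i _ => ?_
  have key : φ.inner (∑ j, μ j • e j) (e i) = μ i * φ.inner (e i) (e i) := by
    rw [φ.inner_sum_left, Finset.sum_eq_single i]
    · exact φ.inner_smul_left _ _ _
    · intro j _ hji
      rw [φ.inner_smul_left, horth j i hji, mul_zero]
    · simp
  rw [φ.inner_smul_left, ← φ.inner_conj_symm, key, star_mul, φ.inner_conj_symm]
  ring

/-- The Gelfand transform of `KHForm.val_sum_mul_self`. -/
lemma KHForm.char_val_sum_sq (horth : ∀ i j, i ≠ j → φ.inner (e i) (e j) = 0)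
    (χ : characterSpace ℂ A) (μ : Fin d → A) :
    (χ (L.val (∑ j, μ j • e j))).re ^ 2 =
      ∑ j, ‖χ (μ j)‖ ^ 2 * (χ (φ.inner (e j) (e j))).re := by
  have h := congrArg χ (φ.val_sum_mul_self horth μ)
  rw [map_mul, map_sum, (char_nonneg χ (L.nonneg _)).2] at h
  have h' := congrArg Complex.re h
  rw [Complex.re_sum, ← Complex.ofReal_mul, Complex.ofReal_re] at h'
  rw [sq, h']
  refine Finset.sum_congr rfl fun j _ => ?_
  rw [map_mul, map_mul, char_star]
  have : χ (μ j) * star (χ (μ j)) = ((‖χ (μ j)‖ ^ 2 : ℝ) : ℂ) := by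
    rw [← starRingEnd_apply, Complex.mul_conj, Complex.normSq_eq_norm_sq]
  rw [this, Complex.re_ofReal_mul]

lemma bounded_imp_unif [StoneAlgebra A]
    (horth : ∀ i j, i ≠ j → φ.inner (e i) (e j) = 0)
    (hidem : ∀ j, IsIdempotentElem (φ.inner (e j) (e j)))
    (hbasis : ∀ f : E, ∃ lam : Fin d → A, f = ∑ j, lam j • e j)
    {M : Set E} (h : L.OrderBounded M) : L.UnifTotallyOrderBounded M := by
  classical
  obtain ⟨f, -, hf⟩ := h
  intro ε hε
  set C : ℝ := ‖f‖ * ‖(1 : A)‖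
  have hC : 0 ≤ C := by positivity
  set δ : ℝ := ε / (d + 1) with hδ_def
  have hδ : 0 < δ := by positivity
  obtain ⟨T, -, hTfin, hTcov⟩ := (isCompact_closedBall (0 : ℂ) C).finite_cover_balls hδ
  have hnet : ∀ z : ℂ, ‖z‖ ≤ C → ∃ g ∈ hTfin.toFinset, ‖z - g‖ < δ := by
    intro z hz
    have := hTcov (mem_closedBall_zero_iff.mpr hz)
    simp only [Set.mem_iUnion, Metric.mem_ball, dist_eq_norm] at this
    obtain ⟨g, hg, hzg⟩ := this
    exact ⟨g, hTfin.mem_toFinset.mpr hg, hzg⟩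
  set G := hTfin.toFinset
  obtain ⟨g₀, hg₀, -⟩ := hnet 0 (by simpa using hC)
  -- `F` consists of all combinations of the `e j` with constant coefficients in the net `G`.
  set F : Finset E := (Fintype.piFinset fun _ : Fin d => G).image
    fun g => ∑ j, algebraMap ℂ A (g j) • e j
  have hFne : F.Nonempty :=
    ⟨_, Finset.mem_image_of_mem _ (Fintype.mem_piFinset.mpr fun _ : Fin d => hg₀)⟩
  refine ⟨F, hFne, fun x hx => ?_⟩
  have h0 : (0 : A) ∈ lowerBounds ((fun y => L.val (x - y)) '' (F : Set E)) := by
    rintro _ ⟨y, -, rfl⟩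
    exact L.nonneg _
  obtain ⟨v, hv⟩ := StoneAlgebra.exists_isGLB _ (hFne.to_set.image fun y => L.val (x - y)) ⟨0, h0⟩
  refine ⟨v, hv, le_algebraMap_of_char (hv.2 h0) hε.le fun χ => ?_⟩
  obtain ⟨lam, hlam⟩ := hbasis x
  have hp : ∀ j, (χ (φ.inner (e j) (e j))).re = 0 ∨ (χ (φ.inner (e j) (e j))).re = 1 := by
    intro j
    rcases IsIdempotentElem.iff_eq_zero_or_one.mp ((hidem j).map χ) with h | h <;> simp [h]
  have hp0 : ∀ j, 0 ≤ (χ (φ.inner (e j) (e j))).re := fun j => by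
    rcases hp j with h | h <;> simp [h]
  have hsum : ∑ j, ‖χ (lam j)‖ ^ 2 * (χ (φ.inner (e j) (e j))).re ≤ C ^ 2 := by
    rw [← φ.char_val_sum_sq horth, ← hlam]
    exact pow_le_pow_left₀ (char_nonneg χ (L.nonneg x)).1
      ((char_mono χ (hf x hx)).trans (char_re_le χ f)) 2
  -- Where `χ(p_j) = 0` the coefficient at `e j` is irrelevant; otherwise it lies in the disc.
  have hchoice : ∀ j, ∃ g ∈ G,
      ‖χ (lam j) - g‖ ^ 2 * (χ (φ.inner (e j) (e j))).re ≤ δ ^ 2 := by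
    intro j
    rcases hp j with h | h
    · exact ⟨g₀, hg₀, by rw [h]; simpa using sq_nonneg δ⟩
    · have h1 := (Finset.single_le_sum
        (f := fun j => ‖χ (lam j)‖ ^ 2 * (χ (φ.inner (e j) (e j))).re)
        (fun k _ => mul_nonneg (sq_nonneg _) (hp0 k)) (Finset.mem_univ j)).trans hsum
      simp only [h, mul_one] at h1
      obtain ⟨g, hg, hlt⟩ := hnet _ (le_of_sq_le_sq h1 hC)
      exact ⟨g, hg, by rw [h, mul_one]; exact pow_le_pow_left₀ (norm_nonneg _) hlt.le 2⟩
  choose g hg hgle using hchoice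
  have hvle : v ≤ L.val (∑ j, (lam j - algebraMap ℂ A (g j)) • e j) := by
    have := hv.1 ⟨_, Finset.mem_coe.mpr
      (Finset.mem_image_of_mem _ (Fintype.mem_piFinset.mpr hg)), rfl⟩
    simpa only [hlam, sub_smul, Finset.sum_sub_distrib] using this
  refine (char_mono χ hvle).trans (le_of_sq_le_sq ?_ hε.le)
  rw [φ.char_val_sum_sq horth]
  calc ∑ j, ‖χ (lam j - algebraMap ℂ A (g j))‖ ^ 2 * (χ (φ.inner (e j) (e j))).re
      ≤ ∑ _j : Fin d, δ ^ 2 := by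
        refine Finset.sum_le_sum fun j _ => ?_
        rw [map_sub, AlgHomClass.commutes]
        exact hgle j
    _ = d * δ ^ 2 := by simp
    _ ≤ (((d : ℝ) + 1) * δ) ^ 2 := by
        have : (0 : ℝ) ≤ d := Nat.cast_nonneg d
        nlinarith [sq_nonneg δ, mul_nonneg this (sq_nonneg δ),
          mul_nonneg (mul_nonneg this this) (sq_nonneg δ)]
    _ = ε ^ 2 := by
        rw [hδ_def]
        field_simp

end Module

/-- In a Kaplansky–Hilbert module of finite rank (one possessing a
finite suborthonormal basis), a subset is order-bounded iff it is totally order-bounded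
iff it is uniformly totally order-bounded. -/
theorem finiteRank_totallyOrderBounded_tfae
    {A : Type*} [NormedCommRing A] [StarRing A] [CStarRing A] [NormedAlgebra ℂ A]
    [CompleteSpace A] [PartialOrder A] [StarOrderedRing A] [StoneAlgebra A]
    {E : Type*} [AddCommGroup E] [Module ℂ E] [Module A E] [IsScalarTower ℂ A E]
    (L : LatticeNorm A E) (hLmod : L.IsModuleNorm) (hcomplete : L.OrderComplete)
    (φ : KHForm L)
    (d : ℕ) (e : Fin d → E)
    (horth : ∀ i j, i ≠ j → φ.inner (e i) (e j) = 0)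
    (hidem : ∀ j, IsIdempotentElem (φ.inner (e j) (e j)))
    (hbasis : ∀ f : E, ∃ lam : Fin d → A,
      (∀ j, ∃ a : A, lam j = φ.inner (e j) (e j) * a) ∧ f = ∑ j, lam j • e j)
    (M : Set E) :
    (L.OrderBounded M ↔ L.TotallyOrderBounded M) ∧
    (L.TotallyOrderBounded M ↔ L.UnifTotallyOrderBounded M) := by
  have hbasis' : ∀ f : E, ∃ lam : Fin d → A, f = ∑ j, lam j • e j := fun f =>
    (hbasis f).imp fun _ h => h.2
  have h13 : L.OrderBounded M → L.UnifTotallyOrderBounded M :=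
    bounded_imp_unif φ horth hidem hbasis'
  exact ⟨⟨fun h => unif_imp_totally (h13 h), totally_imp_bounded⟩,
    fun h => h13 (totally_imp_bounded h), unif_imp_totally⟩
end
end

section
/- Let E be a lattice-normed space over a Stone algebra A that is disjointly decomposable: whenever x ∈ E and |x| = a₁ + a₂ with a₁, a₂ ∈ A₊ and a₁ ∧ a₂ = 0, there exist x₁, x₂ ∈ E with x = x₁ + x₂, |x₁| = a₁ and |x₂| = a₂. Then E is finitely mix-complete: for every finite partition of unity p₁, …, p_n of idempotents in A and all x₁, …, x_n ∈ E there exists x ∈ E with p_i·|x − x_i| = 0 for every i = 1, …, n. -/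
/-!
Multiplication by an idempotent `p` is monotone, because `p` is self-adjoint and hence
`p * a = star p * a * p`. Consequently `p * a` and `(1 - p) * a` have infimum `0` for every `a`
in the positive cone: a lower bound `b` satisfies `(1 - p) * b ≤ 0` and `p * b ≤ 0`.
Disjoint decomposability applied to `|xⱼ| = pⱼ|xⱼ| + (1 - pⱼ)|xⱼ|` thus gives `yⱼ` with
`|yⱼ| = pⱼ|xⱼ|` and `|xⱼ - yⱼ| = (1 - pⱼ)|xⱼ|`. The mixing is `x₀ = ∑ j, yⱼ`: in
`x₀ - xᵢ = (∑ j ≠ i, yⱼ) - (xᵢ - yᵢ)` every summand is annihilated by `pᵢ`, and the elements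
`z` with `pᵢ|z| = 0` are closed under addition and negation.
-/

noncomputable section

open scoped Pointwise

section Idempotent

variable {A : Type*} [NormedCommRing A] [StarRing A] [CStarRing A]

theorem star_eq_of_idem {p : A} (hp : IsIdempotentElem p) : star p = p := by
  -- The C*-identity annihilates `d = p - star p * p`, so `p = star p * p` is self-adjoint.
  have h : star (p - star p * p) * (p - star p * p) = 0 := by
    simp only [star_sub, star_mul, star_star]
    linear_combination (star p * star p - star p) * hp.eq
  have h' := sub_eq_zero.1 (CStarRing.star_mul_self_eq_zero_iff _ |>.1 h)
  rw [h', star_mul, star_star]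

variable [PartialOrder A] [StarOrderedRing A]

theorem idem_mul_le_mul {p a b : A} (hp : IsIdempotentElem p) (hab : a ≤ b) :
    p * a ≤ p * b := by
  have h := star_left_conjugate_le_conjugate hab p
  have e : ∀ c : A, star p * c * p = p * c := fun c => by
    rw [star_eq_of_idem hp, mul_right_comm, hp.eq]
  rwa [e, e] at h

theorem idem_mul_nonneg {p a : A} (hp : IsIdempotentElem p) (ha : 0 ≤ a) : 0 ≤ p * a := by
  simpa using idem_mul_le_mul hp ha

theorem isGLB_idem_mul {p a : A} (hp : IsIdempotentElem p) (ha : 0 ≤ a) :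
    IsGLB ({p * a, (1 - p) * a} : Set A) 0 := by
  constructor
  · rintro _ (rfl | rfl)
    exacts [idem_mul_nonneg hp ha, idem_mul_nonneg hp.one_sub ha]
  · intro b hb
    have h1 := idem_mul_le_mul hp.one_sub (hb (Set.mem_insert _ _))
    have h2 := idem_mul_le_mul hp (hb (Set.mem_insert_of_mem _ rfl))
    rw [← mul_assoc (1 - p) p, hp.one_sub_mul_self, zero_mul] at h1
    rw [← mul_assoc p (1 - p), hp.mul_one_sub_self, zero_mul] at h2
    calc b = (1 - p) * b + p * b := by ring
      _ ≤ 0 := add_nonpos h1 h2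

end Idempotent

section Vanishing

variable {A : Type*} [NormedCommRing A] [StarRing A] [CStarRing A] [NormedAlgebra ℂ A]
  [PartialOrder A] [StarOrderedRing A] {E : Type*} [AddCommGroup E] [Module ℂ E]

theorem LatticeNorm.val_neg' [CompleteSpace A] (L : LatticeNorm A E) (x : E) :
    L.val (-x) = L.val x := by
  simpa using L.val_smul (-1) x

theorem LatticeNorm.idem_mul_val_add [CompleteSpace A] (L : LatticeNorm A E) {p : A}
    (hp : IsIdempotentElem p) {x y : E} (hx : p * L.val x = 0) (hy : p * L.val y = 0) :
    p * L.val (x + y) = 0 := by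
  refine le_antisymm ?_ (idem_mul_nonneg hp (L.nonneg _))
  simpa [mul_add, hx, hy] using idem_mul_le_mul hp (L.val_add_le x y)

theorem LatticeNorm.idem_mul_val_sum [CompleteSpace A] (L : LatticeNorm A E) {p : A}
    (hp : IsIdempotentElem p) {ι : Type*} (s : Finset ι) (y : ι → E)
    (h : ∀ j ∈ s, p * L.val (y j) = 0) : p * L.val (∑ j ∈ s, y j) = 0 :=
  Finset.sum_induction y (fun z => p * L.val z = 0)
    (fun _ _ => L.idem_mul_val_add hp) (by simp [(L.eq_zero_iff 0).2 rfl]) h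

end Vanishing

/-- A disjointly decomposable lattice-normed space over a Stone
algebra is finitely mix-complete. -/
theorem finitelyMixComplete_of_disjointlyDecomposable
    {A : Type*} [NormedCommRing A] [StarRing A] [CStarRing A] [NormedAlgebra ℂ A]
    [CompleteSpace A] [PartialOrder A] [StarOrderedRing A] [StoneAlgebra A]
    {E : Type*} [AddCommGroup E] [Module ℂ E]
    (L : LatticeNorm A E)
    (hdec : ∀ (x : E) (a₁ a₂ : A), 0 ≤ a₁ → 0 ≤ a₂ → L.val x = a₁ + a₂ →
      IsGLB ({a₁, a₂} : Set A) 0 →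
      ∃ x₁ x₂ : E, x = x₁ + x₂ ∧ L.val x₁ = a₁ ∧ L.val x₂ = a₂) :
    ∀ (n : ℕ) (p : Fin n → A), (∀ i, IsIdempotentElem (p i)) →
      (∀ i j, i ≠ j → p i * p j = 0) → (∑ i, p i) = 1 →
      ∀ x : Fin n → E, ∃ x₀ : E, ∀ i, p i * L.val (x₀ - x i) = 0 := by
  intro n p hp hdisj _ x
  choose y z hxyz hy hz using fun j => hdec (x j) (p j * L.val (x j)) ((1 - p j) * L.val (x j))
    (idem_mul_nonneg (hp j) (L.nonneg _)) (idem_mul_nonneg (hp j).one_sub (L.nonneg _))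
    (by ring) (isGLB_idem_mul (hp j) (L.nonneg _))
  refine ⟨∑ j, y j, fun i => ?_⟩
  have e : ∑ j, y j - x i = ∑ j ∈ Finset.univ.erase i, y j + -z i := by
    rw [← Finset.sum_erase_add _ _ (Finset.mem_univ i), hxyz i]
    abel
  rw [e]
  refine L.idem_mul_val_add (hp i) (L.idem_mul_val_sum (hp i) _ _ fun j hj => ?_) ?_
  · rw [hy, ← mul_assoc, hdisj i j (Finset.ne_of_mem_erase hj).symm, zero_mul]
  · rw [L.val_neg', hz, ← mul_assoc, (hp i).mul_one_sub_self, zero_mul]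
end
end

section
/- Let E be a Kaplansky–Banach module over a Stone algebra A. Then for a subset M ⊆ E the following are equivalent: (i) M is totally order-bounded; (ii) M is bounded and mix(M) is relatively cyclically compact, i.e. (by Kusraev's characterization of relative cyclical compactness of mix-complete sets): for every real ε > 0 there exist a countable partition of unity (q_n)_{n∈ℕ} of idempotents in A and finite sets F_n ⊆ E such that for every x ∈ mix(M) and every n ∈ ℕ there is z ∈ mix(F_n) with q_n·|x − z| ≤ ε·1. -/
/-!
By Gelfand duality the self-adjoint part of `A` is `C(K, ℝ)` for a compact Hausdorff space `K`
(`KBM.exists_rep`). Mathlib's Gelfand transform needs `star` to be conjugate-linear, which is not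
assumed here but follows from the order (`KBM.starModule`). Order-completeness of `A` makes `K`
extremally disconnected (`KBM.Rep.extremallyDisconnected`). Idempotents are then clopen sets, and a
partition of unity is a family of disjoint clopen sets with dense union (`KBM.Rep.isLUB_chi`).
The lattice norm, evaluated at the points of `K`, is a family of seminorms on `E` that vary
continuously with the point. Non-strict inequalities between them therefore need to be checked only
on dense sets (`KBM.closed_of_dense`). Finite infima are pointwise (`KBM.Rep.infDistLE_iff`), and an
element of `mix M` is one that agrees with elements of `M` on disjoint clopen sets with dense union
(`KBM.Rep.mem_mix_iff`).

*Total order-boundedness gives countable covers* (`KBM.Rep.exists_cover`). If a net decreases to `0`,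
then the open sets where its members are below `ε` have dense union
(`KBM.Rep.dense_of_decrToZero`), and this family is refined by disjoint clopen sets
(`KBM.exists_disjoint_refinement`). On each piece one finite set is an `ε`-net for `M`. There may be
uncountably many pieces, so they are grouped by a natural number bounding both the size of the finite
set and the norms of its elements. Within a group the finite sets are listed by the same number of
indices and are uniformly bounded, so they can be mixed index by index into one finite set. The
mixing exists because the partial sums form an order-Cauchy net (`KBM.Rep.exists_mixing`). The
closures of the unions of the groups form the countable partition of unity. The estimate extends from
`M` to `mix M` by density, and turns into one by a single element of `mix (F n)` by choosing a nearest
element of `F n` locally (`KBM.Rep.exists_mix_near`).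

*Countable covers give total order-boundedness* (`KBM.Rep.totallyOrderBounded_of_cover`). An
approximation by mixings of a finite set `F` is pointwise an approximation by elements of `F`
(`KBM.Rep.near_of_mix_near`). For each `j` take the cover for `ε = 1 / (j + 1)`. At stage `t` the
finite sets for the first `t + 1` pieces of the first `t + 1` covers, together with `0`,
approximate `M` up to the pointwise minimum of `1 / (j + 1)` on those pieces and a bound of `M`
elsewhere. These functions decrease to `0` in the order since the pieces of each cover have dense
union.
-/


noncomputable section

open scoped Pointwise

/-- The mix-closure of `M`: all mixings of families in `M` over partitions of unity of
the Boolean algebra of idempotents of `A`. -/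
def LatticeNorm.mix {A : Type*} [NormedCommRing A] [StarRing A] [CStarRing A]
    [NormedAlgebra ℂ A] [CompleteSpace A] [PartialOrder A] [StarOrderedRing A]
    {E : Type*} [AddCommGroup E] [Module ℂ E]
    (L : LatticeNorm A E) (M : Set E) : Set E :=
  { x : E | ∃ p : M → A, (∀ m, IsIdempotentElem (p m)) ∧
      (∀ m m', m ≠ m' → p m * p m' = 0) ∧ IsLUB (Set.range p) 1 ∧
      ∀ m : M, p m * L.val (x - (m : E)) = 0 }

namespace KBM

universe u

/-! ### Representation by real continuous functions -/

section Representation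

theorem star_real_smul {A : Type*} [NormedCommRing A] [StarRing A] [CStarRing A]
    [NormedAlgebra ℂ A] (c : ℝ) (a : A) : star ((c : ℂ) • a) = (c : ℂ) • star a := by
  let _ : NormedSpace ℝ A := NormedSpace.restrictScalars ℝ ℂ A
  have hc : Continuous (starAddEquiv : A ≃+ A).toAddMonoidHom := by
    change Continuous (star : A → A)
    exact continuous_star
  exact ((starAddEquiv : A ≃+ A).toAddMonoidHom.toRealLinearMap hc).map_smul c a

/-- Compatibility of `star` with complex conjugation of scalars follows from the order: if
`i` is the image of the imaginary unit, then `s = star i * i` is positive with `s * s = 1`, so the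
idempotent `(1 - s) / 2` and its negative are both positive, which forces `s = 1`. -/
theorem starModule {A : Type*} [NormedCommRing A] [StarRing A] [CStarRing A]
    [NormedAlgebra ℂ A] [PartialOrder A] [StarOrderedRing A] : StarModule ℂ A := by
  set i : A := algebraMap ℂ A Complex.I with hi
  have hii : i * i = -1 := by
    rw [hi, ← map_mul, Complex.I_mul_I, map_neg, map_one]
  have hsi : star i * star i = -1 := by
    rw [← star_mul, hii, star_neg, star_one]
  set s : A := star i * i with hs
  have hss : s * s = 1 := by
    have : s * s = (star i * star i) * (i * i) := by rw [hs]; ring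
    rw [this, hii, hsi]; ring
  have hs0 : 0 ≤ s := star_mul_self_nonneg i
  have hstar : star s = s := by rw [hs, star_mul, star_star]
  set h : A := algebraMap ℂ A ((1 / 2 : ℝ) : ℂ) with hh
  have hh2 : 2 * h = 1 := by
    rw [hh, ← map_ofNat (algebraMap ℂ A) 2, ← map_mul]
    norm_num
  have hsh : star h = h := by
    have := star_real_smul (A := A) (1 / 2) 1
    rw [star_one, ← Algebra.algebraMap_eq_smul_one] at this
    exact this
  set e : A := h * (1 - s) with he
  have hse : star e = e := by
    rw [he, star_mul, star_sub, star_one, hstar, hsh, mul_comm]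
  have hee : e * e = e := by
    have : e * e = (2 * h) * h * (1 - s) + h * h * (s * s - 1) := by rw [he]; ring
    rw [this, hh2, hss, he]; ring
  have h1 : 0 ≤ e := by
    have := star_mul_self_nonneg e
    rwa [hse, hee] at this
  have h2 : 0 ≤ -e := by
    have := star_left_conjugate_nonneg hs0 e
    have h3 : star e * s * e = -e := by
      have : e * s * e = s * (e * e) := by ring
      rw [hse, this, hee]
      have : s * e = h * s - h * (s * s) := by rw [he]; ring
      rw [this, hss, he]; ring
    rwa [h3] at this
  have he0 : e = 0 := le_antisymm (neg_nonneg.mp h2) h1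
  have hs1 : s = 1 := by
    have : 1 - s = 2 * e := by
      have : 2 * e = (2 * h) * (1 - s) := by rw [he]; ring
      rw [this, hh2, one_mul]
    rw [he0, mul_zero, sub_eq_zero] at this
    exact this.symm
  have hstari : star i = -i := by
    have : star i * (i * i) = i := by rw [← mul_assoc, ← hs, hs1, one_mul]
    rw [hii] at this
    rw [mul_neg_one] at this
    rw [← this, neg_neg, this]
  refine ⟨fun c a => ?_⟩
  have hc : c • a = (c.re : ℂ) • a + (c.im : ℂ) • (i * a) := by
    conv_lhs => rw [← Complex.re_add_im c]
    rw [add_smul, mul_smul, hi, ← Algebra.smul_def]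
  have hc' : star c • star a = (c.re : ℂ) • star a - (c.im : ℂ) • (i * star a) := by
    have : star c = (c.re : ℂ) - (c.im : ℂ) * Complex.I := by
      apply Complex.ext <;> simp
    rw [this, sub_smul, mul_smul, hi, ← Algebra.smul_def]
  rw [hc, star_add, star_real_smul, star_real_smul, star_mul, hstari, hc', mul_comm, neg_mul,
    smul_neg, sub_eq_add_neg]

/-- A representation of the self-adjoint part of `A` as the real continuous functions on `K`,
recorded through the embedding `R : C(K, ℝ) → A`. The order on `A` corresponds to the pointwise
order, and positive elements, elements below a self-adjoint one and idempotents lie in the range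
of `R`; this is all that is used about self-adjointness. -/
structure Rep (A : Type*) [NormedCommRing A] [StarRing A]
    [NormedAlgebra ℂ A] [PartialOrder A] (K : Type*) [TopologicalSpace K] where
  R : C(K, ℝ) →+* A
  le_iff : ∀ f g, R f ≤ R g ↔ ∀ k, f k ≤ g k
  exists_of_nonneg : ∀ a, 0 ≤ a → ∃ f, a = R f
  exists_of_le : ∀ a f, a ≤ R f → ∃ g, a = R g
  exists_of_idem : ∀ p, IsIdempotentElem p → ∃ f, p = R f
  star_R : ∀ f, star (R f) = R f
  algebraMap_R : ∀ c : ℝ, algebraMap ℂ A (c : ℂ) = R (ContinuousMap.const K c)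

open scoped ComplexOrder in
/-- Gelfand duality, with the character space as `K`. -/
theorem exists_rep (A : Type u) [NormedCommRing A] [StarRing A] [CStarRing A]
    [NormedAlgebra ℂ A] [CompleteSpace A] [PartialOrder A] [StarOrderedRing A] :
    ∃ (K : Type u) (_ : TopologicalSpace K) (_ : CompactSpace K) (_ : T2Space K),
    Nonempty (Rep A K) := by
  have : StarModule ℂ A := starModule
  let _ : CommCStarAlgebra A := CommCStarAlgebra.mk
  let K : Set _ := WeakDual.characterSpace ℂ A
  let J : A ≃⋆ₐ[ℂ] C(K, ℂ) := gelfandStarTransform A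
  have hJ : ∀ a b, a ≤ b ↔ ∀ k, J a k ≤ J b k := fun a b => by
    rw [← ContinuousMap.le_def]
    exact (map_le_map_iff J).symm
  let ofR : C(K, ℝ) →+* C(K, ℂ) := Complex.ofRealHom.compLeftContinuous K Complex.continuous_ofReal
  have hofR : ∀ f k, ofR f k = (f k : ℂ) := fun f k => rfl
  let R : C(K, ℝ) →+* A := (J.symm : C(K, ℂ) →+* A).comp ofR
  have hJR : ∀ f k, J (R f) k = (f k : ℂ) := fun f k => by
    change J (J.symm (ofR f)) k = _
    rw [StarAlgEquiv.apply_symm_apply, hofR]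
  have hex : ∀ a, (∀ k, (J a k).im = 0) → ∃ f, a = R f := fun a ha => by
    refine ⟨⟨fun k => (J a k).re, by fun_prop⟩, (EquivLike.injective J) ?_⟩
    ext k
    rw [hJR]
    apply Complex.ext <;> simp [ha k]
  refine ⟨↥K, inferInstance, inferInstance, inferInstance, ⟨⟨R, ?_, ?_, ?_, ?_, ?_, ?_⟩⟩⟩
  · intro f g
    rw [hJ]
    simp only [hJR, Complex.real_le_real]
  · intro a ha
    refine hex a fun k => ?_
    have := (hJ 0 a).1 ha k
    rw [map_zero, ContinuousMap.zero_apply] at this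
    exact (Complex.le_def.1 this).2.symm
  · intro a f ha
    refine hex a fun k => ?_
    have := (hJ _ _).1 ha k
    rw [hJR] at this
    exact (Complex.le_def.1 this).2
  · intro p hp
    refine hex p fun k => ?_
    have h : J p k * J p k = J p k := by
      rw [← ContinuousMap.mul_apply, ← map_mul, hp.eq]
    rcases IsIdempotentElem.iff_eq_zero_or_one.1 h with h | h
    all_goals simp [h]
  · intro f
    apply EquivLike.injective J
    ext k
    rw [map_star, ContinuousMap.star_apply, hJR]
    simp
  · intro c
    apply EquivLike.injective J
    ext k
    rw [hJR, AlgHomClass.commutes]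
    rfl

end Representation

/-! ### Clopen sets and extremally disconnected spaces -/

section Topology

variable {K : Type*} [TopologicalSpace K]

/-- The characteristic function of a clopen set. -/
def chi (U : TopologicalSpace.Clopens K) : C(K, ℝ) :=
  ⟨(U : Set K).indicator 1, U.isClopen.continuous_indicator continuous_one⟩

theorem chi_mem {U : TopologicalSpace.Clopens K} {k : K} (h : k ∈ U) : chi U k = 1 :=
  Set.indicator_of_mem (s := (U : Set K)) h 1

theorem chi_notMem {U : TopologicalSpace.Clopens K} {k : K} (h : k ∉ U) : chi U k = 0 :=
  Set.indicator_of_notMem (s := (U : Set K)) h 1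

theorem chi_nonneg (U : TopologicalSpace.Clopens K) (k : K) : 0 ≤ chi U k := by
  by_cases h : k ∈ U
  · rw [chi_mem h]; exact zero_le_one
  · rw [chi_notMem h]

theorem chi_mul_self (U : TopologicalSpace.Clopens K) : chi U * chi U = chi U := by
  ext k
  by_cases h : k ∈ U
  · simp [chi_mem h]
  · simp [chi_notMem h]

theorem exists_chi_of_idem {f : C(K, ℝ)} (hf : f * f = f) :
    ∃ U : TopologicalSpace.Clopens K, f = chi U := by
  have h01 : ∀ k, f k = 0 ∨ f k = 1 := fun k =>
    IsIdempotentElem.iff_eq_zero_or_one.1 (show f k * f k = f k by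
      rw [← ContinuousMap.mul_apply, hf])
  have h1 : {k | f k = 1} = {k | 1 / 2 < f k} := by
    ext k
    rcases h01 k with h | h <;> norm_num [h]
  refine ⟨⟨{k | f k = 1}, isClosed_eq (by fun_prop) (by fun_prop), ?_⟩, ?_⟩
  · rw [h1]
    exact isOpen_lt (by fun_prop) (by fun_prop)
  · ext k
    rcases h01 k with h | h
    · rw [chi_notMem, h]
      change ¬ (f k = 1)
      norm_num [h]
    · rw [chi_mem, h]
      exact h

/-- A closed set contains an open set `O` as soon as it contains the part of `O` inside a dense
set. In the applications `C` is given by a non-strict inequality between continuous functions. -/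
theorem closed_of_dense {D O C : Set K} (hD : Dense D) (hO : IsOpen O) (hC : IsClosed C)
    (h : ∀ k ∈ D, k ∈ O → k ∈ C) {k : K} (hk : k ∈ O) : k ∈ C := by
  have := hD.open_subset_closure_inter hO hk
  refine hC.closure_subset_iff.2 ?_ this
  rintro y ⟨hy, hy'⟩
  exact h y hy' hy

theorem exists_bump [CompactSpace K] [T2Space K] {O : Set K} (hO : IsOpen O) {k : K}
    (hk : k ∈ O) : ∃ h : C(K, ℝ), (∀ x, 0 ≤ h x) ∧ (∀ x, h x ≤ 1) ∧ h k = 1 ∧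
      ∀ x, x ∉ O → h x = 0 := by
  obtain ⟨h, h0, h1, h2⟩ := exists_continuous_zero_one_of_isClosed (s := Oᶜ) (t := {k})
    hO.isClosed_compl isClosed_singleton (by simpa using hk)
  exact ⟨h, fun x => (h2 x).1, fun x => (h2 x).2, h1 rfl, fun x hx => h0 hx⟩

/-- The clopen closure of an open set in an extremally disconnected space. -/
def clC [ExtremallyDisconnected K] {O : Set K} (hO : IsOpen O) : TopologicalSpace.Clopens K :=
  ⟨closure O, isClosed_closure, ExtremallyDisconnected.open_closure O hO⟩

theorem mem_clC [ExtremallyDisconnected K] {O : Set K} (hO : IsOpen O) {k : K} :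
    k ∈ clC hO ↔ k ∈ closure O := Iff.rfl

/-- An open family with dense union is refined by a disjoint clopen family with dense union:
well-order the index set and remove from each closure the closure of all its predecessors. -/
theorem exists_disjoint_refinement [ExtremallyDisconnected K] {ι : Type*} (W : ι → Set K)
    (hW : ∀ i, IsOpen (W i)) (hd : Dense (⋃ i, W i)) :
    ∃ P : ι → TopologicalSpace.Clopens K, (∀ i j, i ≠ j → ∀ k, k ∈ P i → k ∉ P j) ∧
      (∀ i k, k ∈ P i → k ∈ closure (W i)) ∧ Dense (⋃ i, (P i : Set K)) := by
  have hB : ∀ i, IsOpen (⋃ j : {j // WellOrderingRel j i}, W j) :=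
    fun i => isOpen_iUnion fun j => hW j.1
  refine ⟨fun i => clC (hW i) \ clC (hB i), ?_, ?_, ?_⟩
  · have key : ∀ i j, WellOrderingRel i j → ∀ k,
        k ∈ clC (hW i) → k ∈ clC (hB j) := fun i j hij k hk =>
      closure_mono (Set.subset_iUnion (fun j' : {j' // WellOrderingRel j' j} => W j') ⟨i, hij⟩) hk
    intro i j hij k hi hj
    rcases trichotomous_of WellOrderingRel i j with h | h | h
    · exact hj.2 (key i j h k hi.1)
    · exact hij h
    · exact hi.2 (key j i h k hj.1)
  · exact fun i k hk => hk.1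
  · rw [dense_iff_inter_open]
    intro O hO hne
    obtain ⟨x, hxO, hx⟩ := hd.inter_open_nonempty O hO hne
    obtain ⟨i, hi⟩ := Set.mem_iUnion.1 hx
    let T : Set ι := {i | (O ∩ W i).Nonempty}
    have hT : T.Nonempty := ⟨i, x, hxO, hi⟩
    have hwf : WellFounded (WellOrderingRel (α := ι)) := IsWellFounded.wf
    obtain ⟨y, hyO, hy⟩ := hwf.min_mem T hT
    refine ⟨y, hyO, Set.mem_iUnion.2 ⟨hwf.min T hT, subset_closure hy, fun hy' => ?_⟩⟩
    obtain ⟨z, hzO, hz⟩ := mem_closure_iff.1 hy' O hO hyO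
    obtain ⟨⟨j, hj⟩, hz⟩ := Set.mem_iUnion.1 hz
    exact hwf.not_lt_min T ⟨z, hzO, hz⟩ hj

end Topology

/-! ### Order and idempotents on the spectrum -/

section Transfer

open TopologicalSpace (Clopens)

variable {A : Type*} [NormedCommRing A] [StarRing A]
  [NormedAlgebra ℂ A] [PartialOrder A] {K : Type*} [TopologicalSpace K]

namespace Rep

variable (J : Rep A K)

theorem inj {f g : C(K, ℝ)} (h : J.R f = J.R g) : f = g :=
  ContinuousMap.ext fun k => le_antisymm ((J.le_iff f g).1 h.le k) ((J.le_iff g f).1 h.ge k)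

theorem nonneg_iff (f : C(K, ℝ)) : 0 ≤ J.R f ↔ ∀ k, 0 ≤ f k := by
  rw [← map_zero J.R, J.le_iff]
  rfl

theorem exists_chi {p : A} (hp : IsIdempotentElem p) : ∃ U : Clopens K, p = J.R (chi U) := by
  obtain ⟨f, rfl⟩ := J.exists_of_idem p hp
  obtain ⟨U, rfl⟩ := exists_chi_of_idem (J.inj ((map_mul J.R f f).trans hp))
  exact ⟨U, rfl⟩

theorem chi_idem (U : Clopens K) : IsIdempotentElem (J.R (chi U)) := by
  rw [IsIdempotentElem, ← map_mul, chi_mul_self]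

theorem chi_mul_eq_zero (U : Clopens K) (f : C(K, ℝ)) :
    J.R (chi U) * J.R f = 0 ↔ ∀ k ∈ U, f k = 0 := by
  rw [← map_mul, ← map_zero J.R]
  constructor
  · intro h k hk
    have := DFunLike.congr_fun (J.inj h) k
    simpa [chi_mem hk] using this
  · intro h
    congr 1
    ext k
    by_cases hk : k ∈ U
    · simp [h k hk]
    · simp [chi_notMem hk]

theorem chi_mul_chi (U V : Clopens K) :
    J.R (chi U) * J.R (chi V) = 0 ↔ ∀ k ∈ U, k ∉ V := by
  rw [chi_mul_eq_zero]
  refine forall₂_congr fun k _ => ⟨fun h hV => ?_, fun h => chi_notMem h⟩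
  rw [chi_mem hV] at h
  exact one_ne_zero h

/-- Suprema in `A` are not pointwise: a family of idempotents has supremum `1` exactly when the
corresponding clopen sets have dense union. -/
theorem isLUB_chi [CompactSpace K] [T2Space K] {ι : Type*} (U : ι → Clopens K) :
    IsLUB (Set.range fun i => J.R (chi (U i))) 1 ↔ Dense (⋃ i, (U i : Set K)) := by
  constructor
  · intro h
    by_contra hd
    obtain ⟨k, hk⟩ : ∃ k, k ∈ (closure (⋃ i, (U i : Set K)))ᶜ := by
      by_contra! hc
      exact hd fun k => not_not.1 (hc k)
    obtain ⟨b, hb0, hb1, hbk, hb⟩ := exists_bump isClosed_closure.isOpen_compl hk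
    have : (1 : A) ≤ J.R (1 - b) := by
      refine h.2 ?_
      rintro _ ⟨i, rfl⟩
      refine (J.le_iff _ _).2 fun x => ?_
      by_cases hx : x ∈ U i
      · have : b x = 0 := hb x fun hx' => hx' (subset_closure (Set.mem_iUnion.2 ⟨i, hx⟩))
        simp [chi_mem hx, this]
      · simpa [chi_notMem hx] using hb1 x
    rw [← map_one J.R, J.le_iff] at this
    have := this k
    simp only [ContinuousMap.one_apply, ContinuousMap.sub_apply, hbk] at this
    norm_num at this
  · intro hd
    refine ⟨?_, fun g hg => ?_⟩
    · rintro _ ⟨i, rfl⟩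
      rw [← map_one J.R, J.le_iff]
      intro x
      by_cases hx : x ∈ U i
      · simp [chi_mem hx]
      · simp [chi_notMem hx]
    · rcases isEmpty_or_nonempty ι with hι | ⟨⟨i⟩⟩
      · have : IsEmpty K := by
          by_contra hK
          rw [not_isEmpty_iff] at hK
          simpa using hd.nonempty
        have h : J.R 1 = J.R 0 := by
          congr 1
          ext k
          exact isEmptyElim k
        rw [map_one, map_zero] at h
        rw [← mul_one g, ← mul_one (1 : A), h, mul_zero, mul_zero]
      · obtain ⟨f, rfl⟩ := J.exists_of_nonneg g
          (((J.nonneg_iff _).2 (chi_nonneg (U i))).trans (hg ⟨i, rfl⟩))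
        rw [← map_one J.R, J.le_iff]
        intro k
        refine closed_of_dense (C := {k | 1 ≤ f k}) hd isOpen_univ
          (isClosed_le (by fun_prop) (by fun_prop)) (fun x hx _ => ?_) (Set.mem_univ k)
        obtain ⟨j, hj⟩ := Set.mem_iUnion.1 hx
        have := (J.le_iff _ _).1 (hg ⟨j, rfl⟩) x
        rwa [chi_mem hj] at this

theorem isGLB_zero {ι : Type*} [Nonempty ι] (w : ι → C(K, ℝ)) (hw : ∀ i k, 0 ≤ w i k)
    (h : ∀ g : C(K, ℝ), (∀ i k, g k ≤ w i k) → ∀ k, g k ≤ 0) :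
    IsGLB (Set.range fun i => J.R (w i)) 0 := by
  refine ⟨?_, fun a ha => ?_⟩
  · rintro _ ⟨i, rfl⟩
    exact (J.nonneg_iff _).2 (hw i)
  · obtain ⟨g, rfl⟩ := J.exists_of_le a (w (Classical.arbitrary ι)) (ha ⟨_, rfl⟩)
    rw [← map_zero J.R, J.le_iff]
    exact h g fun i => (J.le_iff _ _).1 (ha ⟨i, rfl⟩)

/-- A net decreasing to zero in the order need not do so at every point, but the points where it
gets below `ε` are dense: otherwise a bump function of height `ε` is a lower bound. -/
theorem dense_of_decrToZero [CompactSpace K] [T2Space K] {ι : Type} [Preorder ι]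
    {u : ι → A} (hu : LatticeNorm.DecrToZero u) : ∃ w : ι → C(K, ℝ), (∀ i, u i = J.R (w i)) ∧
      (∀ i k, 0 ≤ w i k) ∧ (∀ g : C(K, ℝ), (∀ i k, g k ≤ w i k) → ∀ k, g k ≤ 0) ∧
      ∀ ε : ℝ, 0 < ε → Dense (⋃ i, {k | w i k < ε}) := by
  choose w hw using fun i => J.exists_of_nonneg (u i) (hu.1 i)
  have hw0 : ∀ i k, 0 ≤ w i k := fun i => (J.nonneg_iff _).1 (hw i ▸ hu.1 i)
  have hg : ∀ g : C(K, ℝ), (∀ i k, g k ≤ w i k) → ∀ k, g k ≤ 0 := fun g hg => by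
    refine (J.le_iff g 0).1 ?_
    rw [map_zero]
    refine hu.2.2.2 ?_
    rintro _ ⟨i, rfl⟩
    rw [hw]
    exact (J.le_iff _ _).2 (hg i)
  refine ⟨w, hw, hw0, hg, fun ε hε => ?_⟩
  by_contra hd
  obtain ⟨k, hk⟩ : ∃ k, k ∈ (closure (⋃ i, {k | w i k < ε}))ᶜ := by
    by_contra! hc
    exact hd fun k => not_not.1 (hc k)
  obtain ⟨b, hb0, hb1, hbk, hb⟩ := exists_bump isClosed_closure.isOpen_compl hk
  have := hg (ε • b) (fun i x => ?_) k
  · simp only [ContinuousMap.smul_apply, hbk, smul_eq_mul] at this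
    linarith
  · by_cases hx : x ∈ (closure (⋃ i, {k | w i k < ε}))ᶜ
    · have h1 : ¬ w i x < ε := fun h => hx (subset_closure (Set.mem_iUnion.2 ⟨i, h⟩))
      simp only [ContinuousMap.smul_apply, smul_eq_mul]
      nlinarith [hb1 x]
    · simpa [hb x hx] using hw0 i x

/-- The spectrum of a Stone algebra is extremally disconnected: for an open set `U`, the infimum of
the positive functions that are at least `1` on `U` is the indicator of `closure U`. -/
theorem extremallyDisconnected (J : Rep A K) [CompactSpace K] [T2Space K] [StoneAlgebra A] :
    ExtremallyDisconnected K := by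
  refine ⟨fun U hU => ?_⟩
  let S : Set A := {a | ∃ f : C(K, ℝ), a = J.R f ∧ (∀ x, 0 ≤ f x) ∧ ∀ x ∈ U, 1 ≤ f x}
  have h1S : (1 : A) ∈ S := ⟨1, (map_one J.R).symm, fun _ => zero_le_one, fun _ _ => le_rfl⟩
  have hbdd : (0 : A) ∈ lowerBounds S := by
    rintro _ ⟨f, rfl, hf, -⟩
    exact (J.nonneg_iff f).2 hf
  obtain ⟨v, hv⟩ := StoneAlgebra.exists_isGLB S ⟨1, h1S⟩ ⟨0, hbdd⟩
  obtain ⟨v, rfl⟩ := J.exists_of_nonneg v (hv.2 hbdd)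
  have hvU : ∀ x ∈ U, 1 ≤ v x := fun x hx => by
    obtain ⟨b, hb0, hb1, hbk, hb⟩ := exists_bump hU hx
    have : J.R b ≤ J.R v := by
      refine hv.2 ?_
      rintro _ ⟨f, rfl, hf, hfU⟩
      refine (J.le_iff _ _).2 fun y => ?_
      by_cases hy : y ∈ U
      · exact (hb1 y).trans (hfU y hy)
      · rw [hb y hy]; exact hf y
    rw [← hbk]
    exact (J.le_iff _ _).1 this x
  have hvc : ∀ x ∉ closure U, v x ≤ 0 := fun x hx => by
    obtain ⟨b, hb0, hb1, hbk, hb⟩ := exists_bump isClosed_closure.isOpen_compl hx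
    have : J.R v ≤ J.R (1 - b) := by
      refine hv.1 ⟨1 - b, rfl, fun y => ?_, fun y hy => ?_⟩
      · simpa using hb1 y
      · simp [hb y fun h => h (subset_closure hy)]
    have := (J.le_iff _ _).1 this x
    simpa [hbk] using this
  have : closure U = {x | 1 / 2 < v x} := by
    refine Set.Subset.antisymm (fun x hx => ?_) fun x hx => ?_
    · have hC : IsClosed {x | 1 ≤ v x} := isClosed_le (by fun_prop) (by fun_prop)
      have : 1 ≤ v x := closure_minimal (fun y hy => hvU y hy) hC hx
      exact lt_of_lt_of_le (by norm_num) this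
    · by_contra h
      have h1 := hvc x h
      have h2 : 1 / 2 < v x := hx
      linarith
  rw [this]
  exact isOpen_lt (by fun_prop) (by fun_prop)

end Rep

end Transfer

set_option linter.unusedSectionVars false

/-! ### Lattice norms, infima and mixings on the spectrum -/

section Norm

open TopologicalSpace (Clopens)

variable {A : Type*} [NormedCommRing A] [StarRing A] [CStarRing A]
  [NormedAlgebra ℂ A] [CompleteSpace A] [PartialOrder A] [StarOrderedRing A]
  {K : Type*} [TopologicalSpace K] (J : Rep A K)
  {E : Type*} [AddCommGroup E] [Module ℂ E] (L : LatticeNorm A E)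

namespace Rep

/-- The lattice norm of `x`, as a continuous function on the spectrum. Evaluation at a point of the
spectrum makes it a seminorm on `E`. -/
def nrm (x : E) : C(K, ℝ) := Classical.choose (J.exists_of_nonneg _ (L.nonneg x))

theorem val_eq (x : E) : L.val x = J.R (J.nrm L x) :=
  Classical.choose_spec (J.exists_of_nonneg _ (L.nonneg x))

theorem nrm_nonneg (x : E) (k : K) : 0 ≤ J.nrm L x k :=
  (J.nonneg_iff _).1 (J.val_eq L x ▸ L.nonneg x) k

theorem nrm_add_le (x y : E) (k : K) : J.nrm L (x + y) k ≤ J.nrm L x k + J.nrm L y k := by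
  have := L.val_add_le x y
  rw [J.val_eq, J.val_eq, J.val_eq, ← map_add, J.le_iff] at this
  exact this k

theorem nrm_zero (k : K) : J.nrm L 0 k = 0 := by
  have h : L.val (0 : E) = 0 := (L.eq_zero_iff 0).2 rfl
  rw [J.val_eq, ← map_zero J.R] at h
  rw [J.inj h, ContinuousMap.zero_apply]

theorem nrm_neg (x : E) : J.nrm L (-x) = J.nrm L x := by
  have h : L.val (-x) = L.val x := by
    rw [← neg_one_smul ℂ x, L.val_smul, norm_neg, norm_one, Complex.ofReal_one, map_one, one_mul]
  rw [J.val_eq, J.val_eq] at h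
  exact J.inj h

theorem nrm_sub_comm (x y : E) : J.nrm L (x - y) = J.nrm L (y - x) := by
  rw [← nrm_neg, neg_sub]

theorem nrm_sub_le (x y z : E) (k : K) :
    J.nrm L (x - z) k ≤ J.nrm L (x - y) k + J.nrm L (y - z) k := by
  have := J.nrm_add_le L (x - y) (y - z) k
  rwa [sub_add_sub_cancel] at this

theorem nrm_sum_le {ι : Type*} (S : Finset ι) (f : ι → E) (k : K) :
    J.nrm L (∑ i ∈ S, f i) k ≤ ∑ i ∈ S, J.nrm L (f i) k := by
  classical
  induction S using Finset.induction_on with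
  | empty => simp [nrm_zero]
  | insert i S hi ih =>
    rw [Finset.sum_insert hi, Finset.sum_insert hi]
    exact (J.nrm_add_le L _ _ k).trans (by gcongr)

theorem nrm_smul [Module A E] (hL : L.IsModuleNorm) (f : C(K, ℝ)) (hf : ∀ k, 0 ≤ f k) (x : E)
    (k : K) : J.nrm L (J.R f • x) k = f k * J.nrm L x k := by
  have := hL (J.R f) x (J.R f) ((J.nonneg_iff f).2 hf) (by rw [J.star_R])
  rw [J.val_eq, J.val_eq, ← map_mul] at this
  rw [J.inj this, ContinuousMap.mul_apply]

theorem nrm_sub_chi_smul [Module A E] (hL : L.IsModuleNorm) (U : Clopens K) (x : E) {k : K}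
    (hk : k ∈ U) : J.nrm L (x - J.R (chi U) • x) k = 0 := by
  have h : x - J.R (chi U) • x = J.R (1 - chi U) • x := by
    rw [map_sub, map_one, sub_smul, one_smul]
  rw [h, nrm_smul J L hL, ContinuousMap.sub_apply, chi_mem hk]
  · simp
  · intro k
    by_cases hk : k ∈ U
    · simp [chi_mem hk]
    · simp [chi_notMem hk]

theorem nrm_chi_smul_of_notMem [Module A E] (hL : L.IsModuleNorm) (U : Clopens K) (x : E) {k : K}
    (hk : k ∉ U) : J.nrm L (J.R (chi U) • x) k = 0 := by
  rw [nrm_smul J L hL _ (chi_nonneg U), chi_notMem hk, zero_mul]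

section Glue

variable [Module A E] {ι : Type*}

/-- On the piece `P i` the finite sum `∑ j ∈ S, χ_{P j} • y j` agrees with `y i`. -/
theorem nrm_glue_mem (hL : L.IsModuleNorm) (P : ι → Clopens K) (y : ι → E)
    (hP : ∀ i j, i ≠ j → ∀ k, k ∈ P i → k ∉ P j) {S : Finset ι} {i : ι}
    (hi : i ∈ S) {k : K} (hk : k ∈ P i) :
    J.nrm L (y i - ∑ j ∈ S, J.R (chi (P j)) • y j) k = 0 := by
  classical
  refine le_antisymm ?_ (J.nrm_nonneg L _ k)
  rw [← Finset.add_sum_erase S _ hi, ← sub_sub]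
  have h := J.nrm_add_le L (y i - J.R (chi (P i)) • y i)
    (-∑ j ∈ S.erase i, J.R (chi (P j)) • y j) k
  rw [← sub_eq_add_neg, nrm_neg, J.nrm_sub_chi_smul L hL (P i) (y i) hk, zero_add] at h
  refine (h.trans (J.nrm_sum_le L _ _ k)).trans (Finset.sum_eq_zero fun j hj => ?_).le
  exact J.nrm_chi_smul_of_notMem L hL _ _ (hP i j (Finset.ne_of_mem_erase hj).symm k hk)

theorem nrm_glue_notMem (hL : L.IsModuleNorm) (P : ι → Clopens K) (y : ι → E)
    {S : Finset ι} {k : K} (hk : ∀ i ∈ S, k ∉ P i) :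
    J.nrm L (∑ j ∈ S, J.R (chi (P j)) • y j) k = 0 :=
  le_antisymm ((J.nrm_sum_le L _ _ k).trans (Finset.sum_eq_zero fun j hj =>
    J.nrm_chi_smul_of_notMem L hL _ _ (hk j hj)).le) (J.nrm_nonneg L _ k)

end Glue

/-- Elements that agree at `k` have the same distances at `k`. -/
theorem nrm_congr {x y : E} {k : K} (h : J.nrm L (x - y) k = 0) (z : E) :
    J.nrm L (z - x) k = J.nrm L (z - y) k := by
  refine le_antisymm ?_ ?_
  · have := J.nrm_sub_le L z y x k
    rwa [J.nrm_sub_comm L y x, h, add_zero] at this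
  · have := J.nrm_sub_le L z x y k
    rwa [h, add_zero] at this

/-- A uniformly bounded family indexed by pairwise disjoint clopen sets can be mixed: the finite
partial sums form an order-Cauchy net. Its regulator is `2 * C` times the indicator of the part
of the closure of the union that the finite set has not yet exhausted. -/
theorem exists_mixing [ExtremallyDisconnected K] [Module A E] (hL : L.IsModuleNorm)
    (hcomplete : L.OrderComplete) {ι : Type} (P : ι → Clopens K)
    (hP : ∀ i j, i ≠ j → ∀ k, k ∈ P i → k ∉ P j) (y : ι → E) (C : ℝ) (hC : 0 ≤ C)
    (hy : ∀ i k, J.nrm L (y i) k ≤ C) :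
    ∃ z : E, ∀ i, ∀ k ∈ P i, J.nrm L (y i - z) k = 0 := by
  classical
  have hO : IsOpen (⋃ i, (P i : Set K)) := isOpen_iUnion fun i => (P i).isOpen
  let s : Finset ι → E := fun S => ∑ j ∈ S, J.R (chi (P j)) • y j
  have hsC : ∀ S k, J.nrm L (s S) k ≤ C := fun S k => by
    by_cases h : ∃ i ∈ S, k ∈ P i
    · obtain ⟨i, hi, hk⟩ := h
      have h1 := J.nrm_glue_mem L hL P y hP hi hk
      have h2 := J.nrm_congr L h1 0
      rw [zero_sub, zero_sub, nrm_neg, nrm_neg] at h2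
      exact h2 ▸ hy i k
    · push Not at h
      exact (J.nrm_glue_notMem L hL P y h).trans_le hC
  let D : Finset ι → Clopens K := fun S => clC hO \ S.sup P
  have hsup : ∀ (S : Finset ι) (k : K), k ∈ S.sup P ↔ ∃ i ∈ S, k ∈ P i := fun S k => by
    induction S using Finset.induction_on with
    | empty => exact ⟨fun h => absurd h (Set.notMem_empty k), fun ⟨i, hi, _⟩ => by simp at hi⟩
    | insert i S hi ih =>
      rw [Finset.sup_insert, Finset.exists_mem_insert, ← ih]
      rfl
  have hD : ∀ S k, k ∈ D S ↔ k ∈ closure (⋃ i, (P i : Set K)) ∧ ∀ i ∈ S, k ∉ P i := fun S k => by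
    have : k ∈ D S ↔ k ∈ closure (⋃ i, (P i : Set K)) ∧ k ∉ S.sup P := Iff.rfl
    rw [this, hsup]
    push Not
    rfl
  let w : Finset ι → C(K, ℝ) := fun S => (2 * C) • chi (D S)
  have hw : ∀ S k, w S k = 2 * C * chi (D S) k := fun S k => rfl
  have hw0 : ∀ S k, 0 ≤ w S k := fun S k => mul_nonneg (by positivity) (chi_nonneg _ k)
  have hCauchy : ∀ S₀ S T, S₀ ⊆ S → S₀ ⊆ T → ∀ k, J.nrm L (s S - s T) k ≤ w S₀ k := by
    intro S₀ S T hS hT k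
    by_cases h : ∃ i ∈ S₀, k ∈ P i
    · obtain ⟨i, hi, hk⟩ := h
      have h1 := J.nrm_glue_mem L hL P y hP (hS hi) hk
      have h2 := J.nrm_glue_mem L hL P y hP (hT hi) hk
      have h3 := J.nrm_sub_le L (s S) (y i) (s T) k
      rw [J.nrm_sub_comm L (s S) (y i), h1, h2, add_zero] at h3
      exact h3.trans (hw0 _ _)
    · push Not at h
      by_cases hk : k ∈ closure (⋃ i, (P i : Set K))
      · rw [hw, chi_mem ((hD S₀ k).2 ⟨hk, h⟩)]
        have h3 := J.nrm_add_le L (s S) (-s T) k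
        rw [nrm_neg, ← sub_eq_add_neg] at h3
        linarith [hsC S k, hsC T k]
      · have h1 : ∀ i, k ∉ P i := fun i hi => hk (subset_closure (Set.mem_iUnion.2 ⟨i, hi⟩))
        have h3 := J.nrm_add_le L (s S) (-s T) k
        rw [nrm_neg, ← sub_eq_add_neg, J.nrm_glue_notMem L hL P y fun i _ => h1 i,
          J.nrm_glue_notMem L hL P y fun i _ => h1 i, add_zero] at h3
        exact h3.trans (hw0 _ _)
  have hdecr : LatticeNorm.DecrToZero (A := A) fun S => J.R (w S) := by
    refine ⟨fun S => (J.nonneg_iff _).2 (hw0 S), fun S T hST => (J.le_iff _ _).2 fun k => ?_,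
      J.isGLB_zero w hw0 fun g hg k => ?_⟩
    · by_cases hk : k ∈ D T
      · have : k ∈ D S := (hD S k).2 ⟨((hD T k).1 hk).1, fun i hi => ((hD T k).1 hk).2 i (hST hi)⟩
        rw [hw, hw, chi_mem hk, chi_mem this]
      · rw [hw, chi_notMem hk, mul_zero]
        exact hw0 S k
    · have hcl : ∀ k ∈ closure (⋃ i, (P i : Set K)), g k ≤ 0 := by
        have hcg : IsClosed {k | g k ≤ 0} := isClosed_le (by fun_prop) (by fun_prop)
        refine closure_minimal (fun x hx => ?_) hcg
        obtain ⟨i, hi⟩ := Set.mem_iUnion.1 hx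
        have h1 := hg {i} x
        rwa [hw, chi_notMem (fun h => ((hD {i} x).1 h).2 i (Finset.mem_singleton_self i) hi),
          mul_zero] at h1
      by_cases hk : k ∈ closure (⋃ i, (P i : Set K))
      · exact hcl k hk
      · have h1 := hg ∅ k
        rwa [hw, chi_notMem (fun h => hk ((hD ∅ k).1 h).1), mul_zero] at h1
  obtain ⟨z, κ, _, _, _, u, hu, hconv⟩ := hcomplete (Finset ι) inferInstance inferInstance
    inferInstance s ⟨Finset ι, inferInstance, inferInstance, inferInstance, _, hdecr,
      fun S₀ => ⟨S₀, fun S hS T hT => by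
        rw [J.val_eq, J.le_iff]
        exact hCauchy S₀ S T hS hT⟩⟩
  refine ⟨z, fun i k hk => ?_⟩
  have hle : J.R (chi (P i)) * J.R (J.nrm L (y i - z)) ≤ 0 := by
    refine hu.2.2.2 ?_
    rintro _ ⟨m, rfl⟩
    obtain ⟨S, hS⟩ := hconv m
    obtain ⟨f, hf⟩ := J.exists_of_nonneg _ (hu.1 m)
    have h1 := hS (insert i S) (Finset.subset_insert i S)
    have h0 := hu.1 m
    rw [hf] at h0 h1 ⊢
    rw [J.val_eq, J.le_iff] at h1
    rw [← map_mul, J.le_iff]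
    intro x
    by_cases hx : x ∈ P i
    · rw [ContinuousMap.mul_apply, chi_mem hx, one_mul, J.nrm_sub_comm L,
        J.nrm_congr L (J.nrm_glue_mem L hL P y hP (Finset.mem_insert_self i S) hx),
        J.nrm_sub_comm L]
      exact h1 x
    · rw [ContinuousMap.mul_apply, chi_notMem hx, zero_mul]
      exact (J.nonneg_iff f).1 h0 x
  rw [← map_mul, ← map_zero J.R, J.le_iff] at hle
  have := hle k
  rw [ContinuousMap.mul_apply, chi_mem hk, one_mul] at this
  exact le_antisymm this (J.nrm_nonneg L _ k)

/-- The infimum of finitely many elements of `A₊` is pointwise, so `inf_{y ∈ F} |x - y| ≤ u` means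
that at every point of the spectrum some element of `F` realizes the bound. -/
theorem infDistLE_iff (x : E) {F : Finset E} (hF : F.Nonempty) (w : C(K, ℝ)) :
    L.infDistLE x F (J.R w) ↔ ∀ k, ∃ y ∈ F, J.nrm L (x - y) k ≤ w k := by
  let m : C(K, ℝ) := F.inf' hF fun y => J.nrm L (x - y)
  have hm : ∀ k, m k = F.inf' hF fun y => J.nrm L (x - y) k := fun k =>
    ContinuousMap.inf'_apply hF _ k
  have hlb : J.R m ∈ lowerBounds ((fun y => L.val (x - y)) '' (F : Set E)) := by
    rintro _ ⟨y, hy, rfl⟩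
    dsimp only
    rw [J.val_eq, J.le_iff]
    intro k
    rw [hm]
    exact Finset.inf'_le (fun y => J.nrm L (x - y) k) hy
  constructor
  · rintro ⟨v, hv, hvw⟩ k
    have := (J.le_iff _ _).1 ((hv.2 hlb).trans hvw) k
    rwa [hm, Finset.inf'_le_iff] at this
  · intro h
    refine ⟨J.R m, ⟨hlb, fun a ha => ?_⟩, (J.le_iff _ _).2 fun k => ?_⟩
    · obtain ⟨y, hy⟩ := id hF
      obtain ⟨g, rfl⟩ := J.exists_of_le a (J.nrm L (x - y)) (by
        rw [← J.val_eq]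
        exact ha ⟨y, hy, rfl⟩)
      rw [J.le_iff]
      intro k
      rw [hm, Finset.le_inf'_iff]
      intro y hy
      have := ha ⟨y, hy, rfl⟩
      dsimp only at this
      rw [J.val_eq, J.le_iff] at this
      exact this k
    · rw [hm, Finset.inf'_le_iff]
      exact h k

/-- An element is a mixing of `M` if and only if it agrees with elements of `M` on disjoint clopen
sets with dense union. -/
theorem mem_mix_iff [CompactSpace K] [T2Space K] (M : Set E) (x : E) :
    x ∈ L.mix M ↔ ∃ U : M → Clopens K, (∀ i j, i ≠ j → ∀ k, k ∈ U i → k ∉ U j) ∧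
      Dense (⋃ i, (U i : Set K)) ∧ ∀ m : M, ∀ k ∈ U m, J.nrm L (x - m) k = 0 := by
  constructor
  · rintro ⟨p, hp, hd, hlub, hx⟩
    choose U hU using fun m => J.exists_chi (hp m)
    obtain rfl : p = fun m => J.R (chi (U m)) := funext hU
    refine ⟨U, fun i j hij => (J.chi_mul_chi _ _).1 (hd i j hij), (J.isLUB_chi U).1 hlub,
      fun m => ?_⟩
    rw [← J.chi_mul_eq_zero, ← J.val_eq]
    exact hx m
  · rintro ⟨U, hd, hlub, hx⟩
    refine ⟨fun m => J.R (chi (U m)), fun m => J.chi_idem _,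
      fun i j hij => (J.chi_mul_chi _ _).2 (hd i j hij), (J.isLUB_chi U).2 hlub, fun m => ?_⟩
    rw [J.val_eq, J.chi_mul_eq_zero]
    exact hx m

end Rep

end Norm

/-! ### Total order-boundedness and countable clopen covers -/

section Main

open TopologicalSpace (Clopens)

variable {A : Type*} [NormedCommRing A] [StarRing A] [CStarRing A]
  [NormedAlgebra ℂ A] [CompleteSpace A] [PartialOrder A] [StarOrderedRing A]
  {K : Type*} [TopologicalSpace K] [CompactSpace K] [T2Space K] [ExtremallyDisconnected K]
  (J : Rep A K) {E : Type*} [AddCommGroup E] [Module ℂ E] (L : LatticeNorm A E) {M : Set E}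

namespace Rep

theorem isClosed_near (F : Finset E) (x : E) (ε : ℝ) :
    IsClosed {k | ∃ y ∈ F, J.nrm L (x - y) k ≤ ε} := by
  have : {k | ∃ y ∈ F, J.nrm L (x - y) k ≤ ε} = ⋃ y ∈ F, {k | J.nrm L (x - y) k ≤ ε} := by
    ext k
    simp
  rw [this]
  exact isClosed_biUnion_finset fun y _ => isClosed_le (by fun_prop) (by fun_prop)

theorem orderBounded_of_totallyOrderBounded (J : Rep A K) (h : L.TotallyOrderBounded M) :
    L.OrderBounded M := by
  obtain ⟨ι, _, _, ⟨i⟩, u, hu, hF⟩ := h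
  obtain ⟨F, hFne, hF⟩ := hF i
  obtain ⟨w, hw, hw0, -⟩ := J.dense_of_decrToZero hu
  have h0 : ∀ k, 0 ≤ ∑ y ∈ F, J.nrm L y k := fun k => Finset.sum_nonneg fun y _ =>
    J.nrm_nonneg L y k
  refine ⟨J.R (w i + ∑ y ∈ F, J.nrm L y), (J.nonneg_iff _).2 fun k => ?_, fun x hx => ?_⟩
  · rw [ContinuousMap.add_apply, ContinuousMap.sum_apply]
    exact add_nonneg (hw0 i k) (h0 k)
  · have h1 := hF x hx
    rw [hw, J.infDistLE_iff L x hFne] at h1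
    rw [J.val_eq, J.le_iff]
    intro k
    obtain ⟨y, hy, hxy⟩ := h1 k
    have h2 := J.nrm_sub_le L x y 0 k
    rw [sub_zero, sub_zero] at h2
    have h3 := Finset.single_le_sum (f := fun y => J.nrm L y k) (fun y _ => J.nrm_nonneg L y k) hy
    rw [ContinuousMap.add_apply, ContinuousMap.sum_apply]
    linarith

/-- Countably many clopen sets suffice because the pieces on which one finite set works are grouped
by a common bound `n` for its size and for the norms of its elements. Within one group the finite
sets can be mixed into a single one. -/
theorem exists_cover [Module A E] (hL : L.IsModuleNorm) (hcomplete : L.OrderComplete)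
    (h : L.TotallyOrderBounded M) (ε : ℝ) (hε : 0 < ε) :
    ∃ (Q : ℕ → Clopens K) (F : ℕ → Finset E), (∀ n n', n ≠ n' → ∀ k ∈ Q n, k ∉ Q n') ∧
      Dense (⋃ n, (Q n : Set K)) ∧ (∀ n, (F n).Nonempty) ∧
      ∀ x ∈ M, ∀ n, ∀ k ∈ Q n, ∃ y ∈ F n, J.nrm L (x - y) k ≤ ε := by
  classical
  obtain ⟨ι, _, _, _, u, hu, hF⟩ := h
  choose F hFne hF using hF
  obtain ⟨w, hw, -, -, hd⟩ := J.dense_of_decrToZero hu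
  obtain ⟨P, hP, hPW, hPd⟩ := exists_disjoint_refinement (fun i => {k | w i k < ε})
    (fun i => isOpen_lt (by fun_prop) (by fun_prop)) (hd ε hε)
  have hPε : ∀ i, ∀ k ∈ P i, w i k ≤ ε := fun i k hk => by
    have hC : IsClosed {k | w i k ≤ ε} := isClosed_le (by fun_prop) (by fun_prop)
    have hsub : {k | w i k < ε} ⊆ {k | w i k ≤ ε} := fun y (hy : w i y < ε) => hy.le
    exact closure_minimal hsub hC (hPW i k hk)
  -- The bound `c i` decides to which of the countably many groups the piece `P i` belongs.
  have hc : ∀ i, ∃ n : ℕ, (F i).card ≤ n ∧ ∀ y ∈ F i, ∀ k, J.nrm L y k ≤ n := fun i => by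
    obtain ⟨n, hn⟩ := exists_nat_ge (∑ y ∈ F i, ‖J.nrm L y‖)
    refine ⟨max n (F i).card, le_max_right _ _, fun y hy k => ?_⟩
    have h1 := (Real.le_norm_self _).trans ((J.nrm L y).norm_coe_le_norm k)
    have h2 := Finset.single_le_sum (f := fun y => ‖J.nrm L y‖) (fun y _ => norm_nonneg _) hy
    have h3 : (n : ℝ) ≤ ((max n (F i).card : ℕ) : ℝ) := by exact_mod_cast le_max_left _ _
    linarith
  choose c hcard hcn using hc
  -- The set `F i` is listed, with repetitions, as `e i 0, e i 1, …`, so that the elements listed in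
  -- the same position can be mixed over a whole group.
  have he : ∀ i, ∃ e : ℕ → E, (∀ m, e m ∈ F i) ∧ ∀ y ∈ F i, ∃ m < c i, e m = y := fun i => by
    obtain ⟨y₀, hy₀⟩ := hFne i
    refine ⟨fun m => (F i).toList.getD m y₀, fun m => ?_, fun y hy => ?_⟩
    · dsimp only
      by_cases hm : m < (F i).toList.length
      · rw [List.getD_eq_getElem _ _ hm]
        exact Finset.mem_toList.1 (List.getElem_mem hm)
      · rw [List.getD_eq_default _ _ (not_lt.1 hm)]
        exact hy₀
    · obtain ⟨m, hm, rfl⟩ := List.getElem_of_mem (Finset.mem_toList.2 hy)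
      refine ⟨m, ?_, List.getD_eq_getElem _ _ hm⟩
      rw [Finset.length_toList] at hm
      exact hm.trans_le (hcard i)
  choose e heF he using he
  have hO : ∀ n, IsOpen (⋃ i : {i // c i = n}, (P i : Set K)) := fun n =>
    isOpen_iUnion fun i => (P i.1).isOpen
  have hmix : ∀ n m : ℕ, ∃ z : E, ∀ i : {i // c i = n}, ∀ k ∈ P i,
      J.nrm L (e i m - z) k = 0 := fun n m =>
    J.exists_mixing L hL hcomplete (fun i : {i // c i = n} => P i)
      (fun i j hij => hP i j fun h => hij (Subtype.ext h)) (fun i => e i m) n n.cast_nonneg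
      (fun i k => by
        have := hcn i.1 _ (heF i.1 m) k
        rwa [i.2] at this)
  choose z hz using hmix
  refine ⟨fun n => clC (hO n), fun n => (Finset.range (n + 1)).image (z n), ?_, ?_, fun n => ?_,
    fun x hx n k hk => ?_⟩
  · intro n n' hn k hk hk'
    refine (ExtremallyDisconnected.disjoint_closure_of_disjoint_isOpen ?_ (hO n)
      (hO n')).le_bot ⟨hk, hk'⟩
    rw [Set.disjoint_left]
    intro y hy hy'
    obtain ⟨i, hi⟩ := Set.mem_iUnion.1 hy
    obtain ⟨j, hj⟩ := Set.mem_iUnion.1 hy'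
    exact hP i j (fun h => hn (by rw [← i.2, ← j.2, h])) y hi hj
  · refine hPd.mono (Set.iUnion_subset fun i => ?_)
    refine Set.Subset.trans ?_ (Set.subset_iUnion _ (c i))
    exact fun k hk => subset_closure (Set.mem_iUnion.2 ⟨⟨i, rfl⟩, hk⟩)
  · exact ⟨_, Finset.mem_image_of_mem _ (Finset.self_mem_range_succ n)⟩
  · refine closure_minimal (fun y hy => ?_) (J.isClosed_near L _ x ε) hk
    obtain ⟨⟨i, rfl⟩, hi⟩ := Set.mem_iUnion.1 hy
    have h1 := hF i x hx
    rw [hw, J.infDistLE_iff L x (hFne i)] at h1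
    obtain ⟨v, hv, hxv⟩ := h1 y
    obtain ⟨m, hm, rfl⟩ := he i v hv
    refine ⟨z (c i) m, Finset.mem_image_of_mem _ (Finset.mem_range.2 (by omega)), ?_⟩
    rw [← J.nrm_congr L (hz (c i) m ⟨i, rfl⟩ y hi)]
    exact hxv.trans (hPε i y hi)

/-- If the pointwise distance from `x` to the finite set `F` is less than `ε` on `Q`, then `x` is
`ε`-close on `Q` to a mixing of `F`. -/
theorem exists_mix_near [Module A E] (hL : L.IsModuleNorm) (Q : Clopens K) (F : Finset E)
    (hFne : F.Nonempty) (x : E) (ε : ℝ)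
    (h : ∀ k ∈ Q, ∃ y ∈ F, J.nrm L (x - y) k < ε) :
    ∃ z ∈ L.mix (F : Set E), ∀ k ∈ Q, J.nrm L (x - z) k ≤ ε := by
  classical
  -- Adjoining the complement of `Q` makes the family cover all of `K`, as a mixing requires.
  let W : ↥(F : Set E) → Set K := fun y => {k | J.nrm L (x - y) k < ε} ∪ (Q : Set K)ᶜ
  have hWo : ∀ y, IsOpen (W y) := fun y =>
    (isOpen_lt (by fun_prop) (by fun_prop)).union Q.isClopen.isClosed.isOpen_compl
  have hWd : Dense (⋃ y, W y) := by
    have : (⋃ y, W y) = Set.univ := by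
      rw [Set.eq_univ_iff_forall]
      intro k
      rw [Set.mem_iUnion]
      by_cases hk : k ∈ Q
      · obtain ⟨y, hy, hlt⟩ := h k hk
        exact ⟨⟨y, hy⟩, Or.inl hlt⟩
      · obtain ⟨y, hy⟩ := hFne
        exact ⟨⟨y, hy⟩, Or.inr hk⟩
    rw [this]
    exact dense_univ
  obtain ⟨P, hP, hPW, hPd⟩ := exists_disjoint_refinement W hWo hWd
  have hglue := fun (i : ↥(F : Set E)) k (hk : k ∈ P i) =>
    J.nrm_glue_mem L hL P (fun i => (i : E)) hP (Finset.mem_univ i) hk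
  refine ⟨∑ j, J.R (chi (P j)) • (j : E), (J.mem_mix_iff L _ _).2 ⟨P, hP, hPd, fun i k hk => ?_⟩,
    fun k hk => ?_⟩
  · rw [J.nrm_sub_comm L]
    exact hglue i k hk
  · refine closed_of_dense hPd Q.isOpen
      (C := {k | J.nrm L (x - ∑ j, J.R (chi (P j)) • (j : E)) k ≤ ε})
      (isClosed_le (by fun_prop) (by fun_prop)) (fun k hk hkQ => ?_) hk
    obtain ⟨i, hi⟩ := Set.mem_iUnion.1 hk
    change J.nrm L (x - ∑ j, J.R (chi (P j)) • (j : E)) k ≤ ε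
    rw [← J.nrm_congr L (hglue i k hi)]
    have hC : IsClosed ({k | J.nrm L (x - i) k ≤ ε} ∪ (Q : Set K)ᶜ) :=
      (isClosed_le (by fun_prop) (by fun_prop)).union Q.isOpen.isClosed_compl
    have hsub : W i ⊆ {k | J.nrm L (x - i) k ≤ ε} ∪ (Q : Set K)ᶜ :=
      Set.union_subset_union_left _ fun y (hy : J.nrm L (x - i) y < ε) => hy.le
    rcases closure_minimal hsub hC (hPW i k hi) with h | h
    · exact h
    · exact absurd hkQ h

/-- The diagonal construction: the regulator at stage `t` is the pointwise minimum over `j ≤ t` of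
the functions equal to `1 / (j + 1)` where the first `t + 1` pieces of the `j`-th partition
already provide an approximation, and equal to a bound for `M` elsewhere. -/
theorem totallyOrderBounded_of_cover (f : C(K, ℝ)) (hf : ∀ k, 0 ≤ f k)
    (hM : ∀ x ∈ M, ∀ k, J.nrm L x k ≤ f k) (Q : ℕ → ℕ → Clopens K) (F : ℕ → ℕ → Finset E)
    (hd : ∀ j, Dense (⋃ n, (Q j n : Set K)))
    (h : ∀ j, ∀ x ∈ M, ∀ n, ∀ k ∈ Q j n, ∃ y ∈ F j n, J.nrm L (x - y) k ≤ 1 / ((j : ℝ) + 1)) :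
    L.TotallyOrderBounded M := by
  classical
  let B : ℕ → ℕ → Clopens K := fun j t => (Finset.range (t + 1)).sup (Q j)
  have hB : ∀ j t k, k ∈ B j t ↔ ∃ n ≤ t, k ∈ Q j n := fun j t k => by
    have : ∀ S : Finset ℕ, k ∈ S.sup (Q j) ↔ ∃ n ∈ S, k ∈ Q j n := fun S => by
      induction S using Finset.induction_on with
      | empty => exact ⟨fun h => absurd h (Set.notMem_empty k), fun ⟨i, hi, _⟩ => by simp at hi⟩
      | insert i S hi ih =>
        rw [Finset.sup_insert, Finset.exists_mem_insert, ← ih]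
        rfl
    rw [this]
    simp
  have hj1 : ∀ j : ℕ, 1 / ((j : ℝ) + 1) ≤ 1 := fun j => by
    rw [div_le_one (by positivity)]
    linarith [(Nat.cast_nonneg j : (0 : ℝ) ≤ j)]
  have hj0 : ∀ j : ℕ, 0 ≤ 1 / ((j : ℝ) + 1) := fun j => by positivity
  let w : ℕ → ℕ → C(K, ℝ) := fun j t =>
    (1 / ((j : ℝ) + 1)) • chi (B j t) + (1 - chi (B j t)) * (f + 1)
  have hw1 : ∀ j t k, k ∈ B j t → w j t k = 1 / ((j : ℝ) + 1) := fun j t k hk => by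
    simp [w, chi_mem hk]
  have hw2 : ∀ j t k, k ∉ B j t → w j t k = f k + 1 := fun j t k hk => by
    simp [w, chi_notMem hk]
  have hw0 : ∀ j t k, 0 ≤ w j t k := fun j t k => by
    by_cases hk : k ∈ B j t
    · rw [hw1 j t k hk]; exact hj0 j
    · rw [hw2 j t k hk]; linarith [hf k]
  have hne : ∀ t : ℕ, (Finset.range (t + 1)).Nonempty := fun t => Finset.nonempty_range_add_one
  let v : ℕ → C(K, ℝ) := fun t => (Finset.range (t + 1)).inf' (hne t) fun j => w j t
  have hv : ∀ t k, v t k = (Finset.range (t + 1)).inf' (hne t) fun j => w j t k := fun t k =>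
    ContinuousMap.inf'_apply (hne t) _ k
  have hvle : ∀ t j k, j ≤ t → v t k ≤ w j t k := fun t j k hjt => by
    rw [hv]
    exact Finset.inf'_le (fun j => w j t k) (Finset.mem_range.2 (by omega))
  have hvex : ∀ t k, ∃ j ≤ t, v t k = w j t k := fun t k => by
    rw [hv]
    obtain ⟨j, hj, h⟩ := Finset.exists_mem_eq_inf' (hne t) fun j => w j t k
    exact ⟨j, by simpa [Nat.lt_succ_iff] using hj, h⟩
  refine ⟨ℕ, inferInstance, inferInstance, inferInstance, fun t => J.R (v t), ⟨fun t => ?_,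
    fun s t hst => ?_, ?_⟩, fun t => ?_⟩
  · refine (J.nonneg_iff _).2 fun k => ?_
    obtain ⟨j, -, h⟩ := hvex t k
    exact h ▸ hw0 j t k
  · refine (J.le_iff _ _).2 fun k => ?_
    obtain ⟨j, hj, h⟩ := hvex s k
    rw [h]
    refine (hvle t j k (hj.trans hst)).trans ?_
    by_cases hk : k ∈ B j s
    · have : k ∈ B j t := by
        obtain ⟨n, hn, hkn⟩ := (hB j s k).1 hk
        exact (hB j t k).2 ⟨n, hn.trans hst, hkn⟩
      rw [hw1 j s k hk, hw1 j t k this]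
    · rw [hw2 j s k hk]
      by_cases hk : k ∈ B j t
      · rw [hw1 j t k hk]; linarith [hf k, hj1 j]
      · rw [hw2 j t k hk]
  · refine J.isGLB_zero v (fun t k => ?_) fun g hg k => ?_
    · obtain ⟨j, -, h⟩ := hvex t k
      exact h ▸ hw0 j t k
    · have key : ∀ j : ℕ, g k ≤ 1 / ((j : ℝ) + 1) := fun j => by
        refine closed_of_dense (C := {k | g k ≤ 1 / ((j : ℝ) + 1)}) (hd j) isOpen_univ
          (isClosed_le (by fun_prop) (by fun_prop)) (fun x hx _ => ?_) (Set.mem_univ k)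
        obtain ⟨n, hn⟩ := Set.mem_iUnion.1 hx
        have h1 := (hg (max j n) x).trans (hvle (max j n) j x (le_max_left _ _))
        rwa [hw1 j _ x ((hB j _ x).2 ⟨n, le_max_right _ _, hn⟩)] at h1
      exact ge_of_tendsto' tendsto_one_div_add_atTop_nhds_zero_nat key
  -- The element `0` approximates `M` where the regulator is still the bound `f + 1`.
  · refine ⟨insert 0 ((Finset.range (t + 1) ×ˢ Finset.range (t + 1)).biUnion
      fun p => F p.1 p.2), Finset.insert_nonempty _ _, fun x hx => ?_⟩
    rw [J.infDistLE_iff L x (Finset.insert_nonempty _ _)]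
    intro k
    obtain ⟨j, hj, hjv⟩ := hvex t k
    rw [hjv]
    by_cases hk : k ∈ B j t
    · obtain ⟨n, hn, hkn⟩ := (hB j t k).1 hk
      obtain ⟨y, hy, hxy⟩ := h j x hx n k hkn
      refine ⟨y, Finset.mem_insert_of_mem (Finset.mem_biUnion.2 ⟨(j, n), ?_, hy⟩), ?_⟩
      · simp only [Finset.mem_product, Finset.mem_range]
        omega
      · rwa [hw1 j t k hk]
    · refine ⟨0, Finset.mem_insert_self _ _, ?_⟩
      rw [sub_zero, hw2 j t k hk]
      linarith [hM x hx k]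

theorem subset_mix (J : Rep A K) : M ⊆ L.mix M := fun x hx => by
  classical
  rw [J.mem_mix_iff]
  let U : ↥M → Clopens K := fun m => if m = ⟨x, hx⟩ then ⊤ else ⊥
  have hU1 : U ⟨x, hx⟩ = ⊤ := if_pos rfl
  have hU0 : ∀ m, m ≠ ⟨x, hx⟩ → U m = ⊥ := fun m h => if_neg h
  refine ⟨U, fun i j hij k hi hj => ?_, ?_, fun m k hk => ?_⟩
  · by_cases h : i = ⟨x, hx⟩
    · rw [hU0 j fun h' => hij (h.trans h'.symm)] at hj
      exact Set.notMem_empty k hj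
    · rw [hU0 i h] at hi
      exact Set.notMem_empty k hi
  · refine dense_univ.mono fun k _ => Set.mem_iUnion.2 ⟨⟨x, hx⟩, ?_⟩
    rw [hU1]
    exact Set.mem_univ k
  · by_cases h : m = ⟨x, hx⟩
    · rw [h, sub_self, nrm_zero]
    · rw [hU0 m h] at hk
      exact absurd hk (Set.notMem_empty k)

/-- A bound on the distance of `x` to a mixing of `F` bounds the pointwise distance of `x` to `F`
itself, since the mixing agrees with elements of `F` on a dense set. -/
theorem near_of_mix_near (Q : Clopens K) (F : Finset E) (x z : E) (hz : z ∈ L.mix (F : Set E))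
    (ε : ℝ) (h : ∀ k ∈ Q, J.nrm L (x - z) k ≤ ε) :
    ∀ k ∈ Q, ∃ y ∈ F, J.nrm L (x - y) k ≤ ε := by
  obtain ⟨U, -, hUd, hU⟩ := (J.mem_mix_iff L _ _).1 hz
  intro k hk
  refine closed_of_dense hUd Q.isOpen (J.isClosed_near L F x ε) (fun y hy hyQ => ?_) hk
  obtain ⟨m, hm⟩ := Set.mem_iUnion.1 hy
  refine ⟨m, m.2, ?_⟩
  rw [← J.nrm_congr L (hU m y hm)]
  exact h y hyQ

theorem chi_mul_val_le (Q : Clopens K) (x : E) (ε : ℝ) (hε : 0 ≤ ε) :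
    J.R (chi Q) * L.val x ≤ algebraMap ℂ A (ε : ℂ) ↔ ∀ k ∈ Q, J.nrm L x k ≤ ε := by
  rw [J.val_eq, J.algebraMap_R, ← map_mul, J.le_iff]
  refine forall_congr' fun k => ?_
  by_cases hk : k ∈ Q
  · simp [chi_mem hk, hk]
  · simp [chi_notMem hk, hk, hε]

end Rep

end Main

end KBM

/-- In a Kaplansky–Banach module (an order-complete lattice-normed
module over a Stone algebra), a subset `M` is totally order-bounded if and only if it
is bounded and `mix M` is relatively cyclically compact (in the sense of Kusraev's
characterization). -/
theorem totallyOrderBounded_iff_relCyclicallyCompact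
    {A : Type*} [NormedCommRing A] [StarRing A] [CStarRing A] [NormedAlgebra ℂ A]
    [CompleteSpace A] [PartialOrder A] [StarOrderedRing A] [StoneAlgebra A]
    {E : Type*} [AddCommGroup E] [Module ℂ E] [Module A E] [IsScalarTower ℂ A E]
    (L : LatticeNorm A E) (hLmod : L.IsModuleNorm) (hcomplete : L.OrderComplete)
    (M : Set E) :
    L.TotallyOrderBounded M ↔
      (L.OrderBounded M ∧
        ∀ ε : ℝ, 0 < ε →
          ∃ q : ℕ → A, (∀ n, IsIdempotentElem (q n)) ∧
            (∀ n n', n ≠ n' → q n * q n' = 0) ∧ IsLUB (Set.range q) 1 ∧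
            ∃ F : ℕ → Finset E, ∀ x ∈ L.mix M, ∀ n : ℕ,
              ∃ z ∈ L.mix ((F n : Set E)), q n * L.val (x - z) ≤ algebraMap ℂ A (ε : ℂ)) := by
  obtain ⟨K, _, _, _, ⟨J⟩⟩ := KBM.exists_rep A
  have : ExtremallyDisconnected K := J.extremallyDisconnected
  constructor
  · intro h
    refine ⟨J.orderBounded_of_totallyOrderBounded L h, fun ε hε => ?_⟩
    obtain ⟨Q, F, hQ, hQd, hFne, hF⟩ :=
      J.exists_cover L hLmod hcomplete h (ε / 2) (half_pos hε)
    refine ⟨fun n => J.R (KBM.chi (Q n)), fun n => J.chi_idem _,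
      fun n n' hn => (J.chi_mul_chi _ _).2 (hQ n n' hn), (J.isLUB_chi Q).2 hQd, F,
      fun x hx n => ?_⟩
    -- The estimate for elements of `M` passes to `x ∈ mix M`, which locally is an element of `M`.
    have hnear : ∀ k ∈ Q n, ∃ y ∈ F n, J.nrm L (x - y) k ≤ ε / 2 := fun k hk => by
      obtain ⟨U, -, hUd, hU⟩ := (J.mem_mix_iff L _ _).1 hx
      refine KBM.closed_of_dense hUd (Q n).isOpen (J.isClosed_near L (F n) x (ε / 2))
        (fun v hv hvQ => ?_) hk
      obtain ⟨m, hm⟩ := Set.mem_iUnion.1 hv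
      obtain ⟨y, hy, hle⟩ := hF m m.2 n v hvQ
      refine ⟨y, hy, ?_⟩
      rw [J.nrm_sub_comm L x y, J.nrm_congr L (hU m v hm), J.nrm_sub_comm L]
      exact hle
    obtain ⟨z, hz, hxz⟩ := J.exists_mix_near L hLmod (Q n) (F n) (hFne n) x ε fun k hk => by
      obtain ⟨y, hy, hle⟩ := hnear k hk
      exact ⟨y, hy, hle.trans_lt (half_lt_self hε)⟩
    exact ⟨z, hz, (J.chi_mul_val_le L (Q n) (x - z) ε hε.le).2 hxz⟩
  · rintro ⟨⟨b, hb0, hb⟩, h⟩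
    obtain ⟨f, rfl⟩ := J.exists_of_nonneg b hb0
    have hpos : ∀ j : ℕ, 0 < 1 / ((j : ℝ) + 1) := fun j => by positivity
    choose q hq _ hqlub F hF using fun j : ℕ => h _ (hpos j)
    choose Q hQ using fun j n => J.exists_chi (hq j n)
    obtain rfl : q = fun j n => J.R (KBM.chi (Q j n)) := by
      funext j n
      exact hQ j n
    refine J.totallyOrderBounded_of_cover L f ((J.nonneg_iff f).1 hb0) (fun x hx => ?_) Q F
      (fun j => (J.isLUB_chi (Q j)).1 (hqlub j)) fun j x hx n => ?_
    · have := hb x hx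
      rwa [J.val_eq, J.le_iff] at this
    · obtain ⟨z, hz, hxz⟩ := hF j x (J.subset_mix L hx) n
      exact J.near_of_mix_near L (Q j n) (F j n) x z hz _
        ((J.chi_mul_val_le L (Q j n) (x - z) _ (hpos j).le).1 hxz)
end
end
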